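/- arXiv:2510.15807 — 2 statements merged into one kernel-verified Lean document; each statement's English description precedes it below -/
import Mathlib

section
/- For every integer n ≥ 0 and all real x, y one has Σ_{k=0}^{n} q_{n−k,k}·x^{n−k}·y^{k} = Σ_{i=0}^{n} P(N_n = i)·x^{i}·(x+y)^{n−i}; in particular, if x+y ≠ 0 this equals (x+y)^n·G_n(x/(x+y)). -/
open MeasureTheory

noncomputable section

/-- The triangle with vertices (0,0), (1,0), (0,1). -/
def T : Set (ℝ × ℝ) := convexHull ℝ {(0, 0), (1, 0), (0, 1)}

/-- The uniform distribution on `T`: twice Lebesgue measure restricted to `T`. -/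
def μT : Measure (ℝ × ℝ) := (2 : ENNReal) • (volume.restrict T)

/-- Joint law of `n` independent uniform points in `T`. -/
def P (n : ℕ) : Measure (Fin n → ℝ × ℝ) := Measure.pi fun _ => μT

/-- The random convex chain: convex hull of the points together with `(1,0)` and `(0,1)`. -/
def Tchain (n : ℕ) (ω : Fin n → ℝ × ℝ) : Set (ℝ × ℝ) :=
  convexHull ℝ (Set.range ω ∪ {(1, 0), (0, 1)})

/-- Normalized area `V_n = 2 vol(T_n)`. -/
def V (n : ℕ) (ω : Fin n → ℝ × ℝ) : ℝ := 2 * (volume (Tchain n ω)).toReal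

/-- Number of vertices of `T_n` other than the two corners. -/
def N (n : ℕ) (ω : Fin n → ℝ × ℝ) : ℕ :=
  (Set.extremePoints ℝ (Tchain n ω)).ncard - 2

/-- Normalized moments `q_{n,k} = C(n+k,k) E[V_n^k]`. -/
def q (n k : ℕ) : ℝ := ((n + k).choose k : ℝ) * ∫ ω, (V n ω) ^ k ∂ P n

/-- Probability generating function of `N_n`. -/
def G (n : ℕ) (t : ℝ) : ℝ := ∫ ω, t ^ (N n ω) ∂ P n

/-- Harmonic number. -/
def H (j : ℕ) : ℝ := ∑ i ∈ Finset.range j, 1 / ((i : ℝ) + 1)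

/-- Generalized harmonic number of order 2. -/
def H2 (j : ℕ) : ℝ := ∑ i ∈ Finset.range j, 1 / ((i : ℝ) + 1) ^ 2

/-- `c(k,ℓ)`: elementary symmetric polynomial `e_k` of `2/(j(j+1))`, `j = 1,…,ℓ`. -/
def c (k l : ℕ) : ℝ :=
  ∑ S ∈ (Finset.Icc 1 l).powersetCard k, ∏ j ∈ S, 2 / ((j : ℝ) * ((j : ℝ) + 1))

/-- The chain over a general index type. -/
def CH {ι : Type} (a : ι → ℝ × ℝ) : Set (ℝ × ℝ) :=
  convexHull ℝ (Set.range a ∪ {(1, 0), (0, 1)})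

theorem mem_convexHull_range_iff {ι : Type} [Fintype ι] (v : ι → ℝ × ℝ) (x : ℝ × ℝ) :
    x ∈ convexHull ℝ (Set.range v) ↔ ∃ w ∈ stdSimplex ℝ ι, ∑ i, w i • v i = x := by
  classical
  constructor
  · intro hx
    have hconv : Convex ℝ {x : ℝ × ℝ | ∃ w ∈ stdSimplex ℝ ι, ∑ i, w i • v i = x} := by
      rintro _ ⟨w, hw, rfl⟩ _ ⟨w', hw', rfl⟩ a b ha hb hab
      refine ⟨a • w + b • w', convex_stdSimplex ℝ ι hw hw' ha hb hab, ?_⟩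
      simp [add_smul, Finset.sum_add_distrib, Finset.smul_sum, mul_smul]
    refine convexHull_min ?_ hconv hx
    rintro _ ⟨i, rfl⟩
    exact ⟨Pi.single i 1, single_mem_stdSimplex ℝ i, by simp [Pi.single_apply, ite_smul]⟩
  · rintro ⟨w, hw, rfl⟩
    exact mem_convexHull_of_exists_fintype w v hw.1 hw.2 (fun i => ⟨i, rfl⟩) rfl

/-- Index points together with the corners. -/
def ext2 {ι : Type} (a : ι → ℝ × ℝ) : ι ⊕ Bool → ℝ × ℝ :=
  Sum.elim a (fun b => if b then (1, 0) else (0, 1))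

theorem CH_eq {ι : Type} (a : ι → ℝ × ℝ) : CH a = convexHull ℝ (Set.range (ext2 a)) := by
  unfold CH ext2
  congr 1
  ext p
  simp [eq_comm]
  tauto

theorem isClosed_mem_CH {ι : Type} [Fintype ι] :
    IsClosed {p : (ℝ × ℝ) × (ι → ℝ × ℝ) | p.1 ∈ CH p.2} := by
  have h1 : IsClosed {z : stdSimplex ℝ (ι ⊕ Bool) × ((ℝ × ℝ) × (ι → ℝ × ℝ)) |
      ∑ i, (z.1 : ι ⊕ Bool → ℝ) i • ext2 z.2.2 i = z.2.1} := by
    apply isClosed_eq _ (by fun_prop)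
    refine continuous_finsetSum _ fun i _ => ?_
    refine Continuous.smul (M := ℝ) (X := ℝ × ℝ) ?_ ?_
    · exact (continuous_apply i).comp (continuous_subtype_val.comp continuous_fst)
    · cases i with
      | inl i => simp only [ext2, Sum.elim_inl]; fun_prop
      | inr i => simp only [ext2, Sum.elim_inr]; fun_prop
  haveI : CompactSpace (stdSimplex ℝ (ι ⊕ Bool)) :=
    isCompact_iff_compactSpace.mp (isCompact_stdSimplex ℝ _)
  convert isClosedMap_snd_of_compactSpace _ h1
  ext p
  simp only [CH_eq, mem_convexHull_range_iff]
  constructor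
  · rintro ⟨w, hw, h⟩
    exact ⟨(⟨w, hw⟩, p), h, rfl⟩
  · rintro ⟨⟨w, p'⟩, h, rfl⟩
    exact ⟨w, w.2, h⟩

theorem isCompact_CH {ι : Type} [Fintype ι] (a : ι → ℝ × ℝ) : IsCompact (CH a) := by
  rw [CH_eq]
  exact (Set.finite_range _).isCompact_convexHull ℝ

/-- Non-degenerate configurations. -/
def Good {ι : Type} (ω : ι → ℝ × ℝ) : Prop :=
  Function.Injective ω ∧ ∀ i, ω i ≠ (1, 0) ∧ ω i ≠ (0, 1) ∧ ω i ∈ T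

theorem T_sub : T ⊆ {p : ℝ × ℝ | 0 ≤ p.1 ∧ 0 ≤ p.2 ∧ p.1 + p.2 ≤ 1} := by
  apply convexHull_min
  · intro p hp
    simp only [Set.mem_insert_iff, Set.mem_singleton_iff] at hp
    rcases hp with rfl | rfl | rfl <;> norm_num
  · rintro ⟨a, b⟩ ⟨h1, h2, h3⟩ ⟨c, d⟩ ⟨h4, h5, h6⟩ s t hs ht hst
    simp only at h1 h2 h3 h4 h5 h6
    simp only [Prod.smul_mk, smul_eq_mul, Prod.mk_add_mk, Set.mem_setOf_eq]
    refine ⟨by positivity, by positivity, ?_⟩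
    nlinarith

theorem corner1 : ((1, 0) : ℝ × ℝ) ∈ Set.extremePoints ℝ T := by
  rw [mem_extremePoints_iff_left]
  refine ⟨subset_convexHull ℝ _ (by simp), ?_⟩
  rintro ⟨a, b⟩ h1 ⟨c, d⟩ h2 ⟨s, t, hs, ht, hst, h⟩
  obtain ⟨h3, h4, h5⟩ := T_sub h1
  obtain ⟨h6, h7, h8⟩ := T_sub h2
  simp only [Prod.smul_mk, smul_eq_mul, Prod.mk_add_mk, Prod.mk.injEq] at h h3 h4 h5 h6 h7 h8 ⊢
  have : a = 1 := by nlinarith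
  exact ⟨this, by linarith⟩

theorem corner2 : ((0, 1) : ℝ × ℝ) ∈ Set.extremePoints ℝ T := by
  rw [mem_extremePoints_iff_left]
  refine ⟨subset_convexHull ℝ _ (by simp), ?_⟩
  rintro ⟨a, b⟩ h1 ⟨c, d⟩ h2 ⟨s, t, hs, ht, hst, h⟩
  obtain ⟨h3, h4, h5⟩ := T_sub h1
  obtain ⟨h6, h7, h8⟩ := T_sub h2
  simp only [Prod.smul_mk, smul_eq_mul, Prod.mk_add_mk, Prod.mk.injEq] at h h3 h4 h5 h6 h7 h8 ⊢
  have : b = 1 := by nlinarith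
  exact ⟨by linarith, this⟩

theorem CH_sub_T {ι : Type} {a : ι → ℝ × ℝ} (h : ∀ i, a i ∈ T) : CH a ⊆ T := by
  apply convexHull_min _ (convex_convexHull ℝ _)
  rintro p (⟨i, rfl⟩ | hp)
  · exact h i
  · simp only [Set.mem_insert_iff, Set.mem_singleton_iff] at hp
    rcases hp with rfl | rfl
    · exact corner1.1
    · exact corner2.1

theorem nonext_iff {n : ℕ} {ω : Fin n → ℝ × ℝ} (hω : Good ω) (S : Finset (Fin n)) :
    (∀ i ∈ S, ω i ∉ Set.extremePoints ℝ (CH ω)) ↔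
      ∀ i ∈ S, ω i ∈ CH (fun j : {j // ¬ j ∈ S} => ω j) := by
  have hsub : CH (fun j : {j // ¬ j ∈ S} => ω j) ⊆ CH ω := by
    apply convexHull_mono
    apply Set.union_subset_union_left
    rintro _ ⟨j, rfl⟩
    exact ⟨j, rfl⟩
  constructor
  · intro h i _
    have h1 : Set.extremePoints ℝ (CH ω) ⊆ CH (fun j : {j // ¬ j ∈ S} => ω j) := by
      intro p hp
      rcases extremePoints_convexHull_subset hp with ⟨j, rfl⟩ | h2
      · exact subset_convexHull ℝ _ (Or.inl ⟨⟨j, fun hj => h j hj hp⟩, rfl⟩)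
      · exact subset_convexHull ℝ _ (Or.inr h2)
    have h2 := closure_convexHull_extremePoints (isCompact_CH ω) (convex_convexHull ℝ _)
    have h3 : CH ω ⊆ CH (fun j : {j // ¬ j ∈ S} => ω j) := by
      rw [← h2]
      exact closure_minimal (convexHull_min h1 (convex_convexHull ℝ _)) (isCompact_CH _).isClosed
    exact h3 (subset_convexHull ℝ _ (Or.inl ⟨i, rfl⟩))
  · intro h i hi hext
    have h3 : CH ω ⊆ CH (fun j : {j // ¬ j ∈ S} => ω j) := by
      apply convexHull_min _ (convex_convexHull ℝ _)
      rintro p (⟨j, rfl⟩ | hp)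
      · by_cases hj : j ∈ S
        · exact h j hj
        · exact subset_convexHull ℝ _ (Or.inl ⟨⟨j, hj⟩, rfl⟩)
      · exact subset_convexHull ℝ _ (Or.inr hp)
    rw [hsub.antisymm h3 |>.symm] at hext
    rcases extremePoints_convexHull_subset hext with ⟨j, hj⟩ | h2
    · have := hω.1 hj
      exact j.2 (this ▸ hi)
    · simp only [Set.mem_insert_iff, Set.mem_singleton_iff] at h2
      rcases h2 with h2 | h2
      · exact (hω.2 i).1 h2
      · exact (hω.2 i).2.1 h2

/-- The event that all points indexed by `S` lie in the chain of the others. -/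
def A {n : ℕ} (S : Finset (Fin n)) : Set (Fin n → ℝ × ℝ) :=
  {ω | ∀ i ∈ S, ω i ∈ CH (fun j : {j // ¬ j ∈ S} => ω j)}

open Classical in
/-- Number of interior points. -/
def M {n : ℕ} (ω : Fin n → ℝ × ℝ) : ℕ := (Finset.univ.filter fun i : Fin n => ω ∈ A {i}).card

theorem M_le {n : ℕ} (ω : Fin n → ℝ × ℝ) : M ω ≤ n := by
  classical
  exact (Finset.card_filter_le _ _).trans (by simp)

theorem mem_A_singleton {n : ℕ} {ω : Fin n → ℝ × ℝ} (hω : Good ω) (i : Fin n) :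
    ω ∈ A {i} ↔ ω i ∉ Set.extremePoints ℝ (CH ω) := by
  have := nonext_iff hω {i}
  simp only [Finset.mem_singleton, forall_eq] at this
  rw [this]
  simp [A]

theorem mem_A_iff {n : ℕ} {ω : Fin n → ℝ × ℝ} (hω : Good ω) (S : Finset (Fin n)) :
    ω ∈ A S ↔ ∀ i ∈ S, ω ∈ A {i} := by
  simp only [mem_A_singleton hω]
  exact (nonext_iff hω S).symm

theorem N_eq {n : ℕ} {ω : Fin n → ℝ × ℝ} (hω : Good ω) : N n ω = n - M ω := by
  classical
  have hT : CH ω ⊆ T := CH_sub_T fun i => (hω.2 i).2.2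
  have e1 : ((1, 0) : ℝ × ℝ) ∈ Set.extremePoints ℝ (CH ω) :=
    inter_extremePoints_subset_extremePoints_of_subset hT
      ⟨subset_convexHull ℝ _ (Or.inr (by simp)), corner1⟩
  have e2 : ((0, 1) : ℝ × ℝ) ∈ Set.extremePoints ℝ (CH ω) :=
    inter_extremePoints_subset_extremePoints_of_subset hT
      ⟨subset_convexHull ℝ _ (Or.inr (by simp)), corner2⟩
  have h : Set.extremePoints ℝ (CH ω) =
      (((Finset.univ.filter fun i => ¬ ω ∈ A {i}).image ω ∪ {(1, 0), (0, 1)} :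
        Finset (ℝ × ℝ)) : Set (ℝ × ℝ)) := by
    ext p
    simp only [Finset.coe_union, Finset.coe_image, Finset.coe_insert, Finset.coe_singleton,
      Set.mem_union, Set.mem_image, Finset.mem_coe, Finset.mem_filter, Finset.mem_univ, true_and,
      mem_A_singleton hω, not_not, Set.mem_insert_iff, Set.mem_singleton_iff]
    constructor
    · intro hp
      rcases extremePoints_convexHull_subset hp with ⟨j, rfl⟩ | h2
      · exact Or.inl ⟨j, hp, rfl⟩
      · exact Or.inr h2
    · rintro (⟨j, hj, rfl⟩ | rfl | rfl)
      · exact hj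
      · exact e1
      · exact e2
  have hN : N n ω = (Set.extremePoints ℝ (CH ω)).ncard - 2 := rfl
  rw [hN, h, Set.ncard_coe_finset, Finset.card_union_of_disjoint, Finset.card_image_of_injective _ hω.1,
    Finset.card_pair (by simp)]
  · have := Finset.card_filter_add_card_filter_not (s := (Finset.univ : Finset (Fin n)))
      (fun i => ω ∈ A {i})
    simp only [Finset.card_univ, Fintype.card_fin] at this
    unfold M
    omega
  · rw [Finset.disjoint_left]
    intro p hp hp2
    simp only [Finset.mem_image] at hp
    obtain ⟨i, _, rfl⟩ := hp
    simp only [Finset.mem_insert, Finset.mem_singleton] at hp2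
    rcases hp2 with h2 | h2
    · exact (hω.2 i).1 h2
    · exact (hω.2 i).2.1 h2

theorem choose_M {n : ℕ} {ω : Fin n → ℝ × ℝ} (hω : Good ω) (k : ℕ) :
    ((M ω).choose k : ℝ) =
      ∑ S ∈ (Finset.univ : Finset (Fin n)).powersetCard k, (A S).indicator (fun _ => (1 : ℝ)) ω := by
  classical
  simp only [Set.indicator_apply]
  rw [Finset.sum_boole, M, ← Finset.card_powersetCard]
  congr 2
  ext S
  simp only [Finset.mem_powersetCard, Finset.mem_filter, Finset.subset_univ, true_and,
    mem_A_iff hω S, Finset.subset_iff, Finset.mem_univ]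
  tauto

theorem measurable_A {n : ℕ} (S : Finset (Fin n)) : MeasurableSet (A S) := by
  have : A S = ⋂ i ∈ S, (fun ω : Fin n → ℝ × ℝ => (ω i, fun j : {j // ¬ j ∈ S} => ω j)) ⁻¹'
      {p | p.1 ∈ CH p.2} := by
    ext ω; simp [A]
  rw [this]
  refine Finset.measurableSet_biInter _ fun i _ => ?_
  exact (isClosed_mem_CH.preimage (by fun_prop)).measurableSet

theorem measurable_M {n : ℕ} : Measurable (M : (Fin n → ℝ × ℝ) → ℕ) := by
  classical
  have : (M : (Fin n → ℝ × ℝ) → ℕ) = fun ω => ∑ i, (A {i}).indicator (fun _ => 1) ω := by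
    ext ω
    simp [M, Set.indicator_apply, Finset.sum_boole]
  rw [this]
  exact Finset.measurable_sum _ fun i _ => measurable_const.indicator (measurable_A _)

theorem vol_T : volume T < ⊤ := by
  have : IsCompact T := Set.Finite.isCompact_convexHull ℝ (by simp)
  exact this.measure_lt_top

instance : IsFiniteMeasure μT := by
  refine ⟨?_⟩
  simp only [μT, Measure.smul_apply, Measure.restrict_apply_univ, smul_eq_mul]
  exact ENNReal.mul_lt_top (by simp) vol_T

instance (n : ℕ) : IsFiniteMeasure (P n) := by unfold P; infer_instance

theorem μT_singleton (p : ℝ × ℝ) : μT {p} = 0 := by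
  simp only [μT, Measure.smul_apply, smul_eq_mul]
  have : volume.restrict T {p} = 0 := measure_mono_null (by rfl)
    (le_antisymm ((Measure.restrict_apply_le _ _).trans (by simp)) (by simp))
  simp [this]

theorem μT_mem : ∀ᵐ p ∂μT, p ∈ T := by
  have : MeasurableSet T := (Set.Finite.isCompact_convexHull ℝ (by simp)).measurableSet
  unfold μT
  apply Measure.ae_smul_measure
  exact ae_restrict_mem this

theorem pi_hyp {ι : Type} [Fintype ι] (i : ι) (x : ℝ × ℝ) :
    Measure.pi (fun _ : ι => μT) {f | f i = x} = 0 := by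
  have : NullSingletonClass μT := ⟨μT_singleton⟩
  exact Measure.pi_hyperplane _ _ _

theorem pi_pow {ι : Type} [Fintype ι] (s : Set (ℝ × ℝ)) :
    Measure.pi (fun _ : ι => μT) (Set.univ.pi fun _ => s) = μT s ^ Fintype.card ι := by
  rw [Measure.pi_pi]
  simp

theorem ae_ne (n : ℕ) (i j : Fin n) (hij : i ≠ j) : ∀ᵐ ω ∂P n, ω i ≠ ω j := by
  have mp := measurePreserving_piEquivPiSubtypeProd (fun _ : Fin n => μT) (fun l => l = i)
  have hm : MeasurableSet {p : ({l // l = i} → ℝ × ℝ) × ({l // ¬ l = i} → ℝ × ℝ) |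
      p.1 ⟨i, rfl⟩ = p.2 ⟨j, hij.symm⟩} := (isClosed_eq (by fun_prop) (by fun_prop)).measurableSet
  have h0 := mp.measure_preimage hm.nullMeasurableSet
  rw [Measure.prod_apply_symm hm] at h0
  rw [ae_iff]
  simp only [ne_eq, not_not]
  refine Eq.trans ?_ (h0.trans ?_)
  · rfl
  · rw [lintegral_eq_zero_iff' (by
      exact (measurable_measure_prodMk_right hm).aemeasurable)]
    refine Filter.Eventually.of_forall fun b => ?_
    exact @pi_hyp _ (_) _ _

theorem ae_good (n : ℕ) : ∀ᵐ ω ∂P n, Good ω := by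
  haveI : NullSingletonClass μT := ⟨μT_singleton⟩
  have h1 : ∀ᵐ ω ∂P n, ∀ i j, i ≠ j → ω i ≠ ω j := by
    simp only [ae_all_iff]
    exact fun i j hij => ae_ne n i j hij
  have h2 : ∀ᵐ ω ∂P n, ∀ i, ω i ≠ (1, 0) :=
    ae_all_iff.2 fun i => Measure.ae_eval_ne (μ := fun _ => μT) i _
  have h3 : ∀ᵐ ω ∂P n, ∀ i, ω i ≠ (0, 1) :=
    ae_all_iff.2 fun i => Measure.ae_eval_ne (μ := fun _ => μT) i _
  have h4 : ∀ᵐ ω ∂P n, ∀ i, ω i ∈ T :=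
    ae_all_iff.2 fun i => (Measure.quasiMeasurePreserving_eval (fun _ : Fin n => μT) i).ae μT_mem
  filter_upwards [h1, h2, h3, h4] with ω a b c d
  refine ⟨fun i j h => ?_, fun i => ⟨b i, c i, d i⟩⟩
  by_contra hne
  exact a i j hne h

theorem P_A {n : ℕ} (S : Finset (Fin n)) (k : ℕ) (hS : S.card = k) :
    (P n (A S)).toReal = ∫ ω, (V (n - k) ω) ^ k ∂P (n - k) := by
  classical
  have mp := measurePreserving_piEquivPiSubtypeProd (fun _ : Fin n => μT) (fun l => l ∈ S)
  have hm : MeasurableSet {p : ({l // l ∈ S} → ℝ × ℝ) × ({l // ¬ l ∈ S} → ℝ × ℝ) |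
      ∀ i, p.1 i ∈ CH p.2} := by
    rw [Set.setOf_forall]
    refine MeasurableSet.iInter fun i => ?_
    exact (isClosed_mem_CH.preimage (f := fun p : ({l // l ∈ S} → ℝ × ℝ) ×
      ({l // ¬ l ∈ S} → ℝ × ℝ) => (p.1 i, p.2)) (by fun_prop)).measurableSet
  have h0 := mp.measure_preimage hm.nullMeasurableSet
  rw [Measure.prod_apply_symm hm] at h0
  have h1 : P n (A S) = ∫⁻ a, (μT (CH a)) ^ k ∂(Measure.pi fun _ : {l // ¬ l ∈ S} => μT) := by
    refine Eq.trans ?_ (h0.trans ?_)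
    · unfold P
      congr 1
      ext ω
      simp [A, MeasurableEquiv.piEquivPiSubtypeProd, Equiv.piEquivPiSubtypeProd]
    · refine lintegral_congr fun a => ?_
      have : (fun x : {l // l ∈ S} → ℝ × ℝ => (x, a)) ⁻¹' {p | ∀ i, p.1 i ∈ CH p.2} =
          Set.univ.pi fun _ => CH a := by
        ext x; simp
      rw [this, @pi_pow _ (_), Fintype.card_subtype]
      simp [hS]
  have hcard : Fintype.card {l // ¬ l ∈ S} = n - k := by
    simp [Fintype.card_subtype_compl, hS]
  let e : Fin (n - k) ≃ {l // ¬ l ∈ S} := (Fintype.equivFinOfCardEq hcard).symm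
  have mp2 := measurePreserving_arrowCongr' (fun _ : Fin (n - k) => μT)
    (fun _ : {l // ¬ l ∈ S} => μT) e (MeasurableEquiv.refl _) (fun _ => MeasurePreserving.id _)
  have h2 : P n (A S) = ∫⁻ a, (μT (CH a)) ^ k ∂P (n - k) := by
    rw [h1, ← mp2.lintegral_comp_emb (MeasurableEquiv.measurableEmbedding _)]
    unfold P
    refine lintegral_congr fun a => ?_
    congr 2
    unfold CH
    congr 2
    exact e.symm.surjective.range_comp a
  have hmeas : Measurable fun a : Fin (n - k) → ℝ × ℝ => μT (CH a) :=
    measurable_measure_prodMk_right isClosed_mem_CH.measurableSet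
  rw [h2, ← integral_toReal (hmeas.pow_const k).aemeasurable
    (Filter.Eventually.of_forall fun a => ENNReal.pow_lt_top (measure_lt_top _ _))]
  refine integral_congr_ae ?_
  filter_upwards [ae_good (n - k)] with a ha
  have hT : CH a ⊆ T := CH_sub_T fun i => (ha.2 i).2.2
  have : V (n - k) a = (μT (CH a)).toReal := by
    simp only [μT, Measure.smul_apply, smul_eq_mul, ENNReal.toReal_mul]
    rw [Measure.restrict_eq_self _ hT]
    rfl
  rw [this, ENNReal.toReal_pow]

theorem int_choose (n k : ℕ) (hk : k ≤ n) :
    ∫ ω, ((M ω).choose k : ℝ) ∂P n = q (n - k) k := by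
  have h : ∫ ω, ((M ω).choose k : ℝ) ∂P n =
      ∫ ω, ∑ S ∈ (Finset.univ : Finset (Fin n)).powersetCard k,
        (A S).indicator (fun _ => (1 : ℝ)) ω ∂P n := by
    refine integral_congr_ae ?_
    filter_upwards [ae_good n] with ω hω using choose_M hω k
  rw [h, integral_finsetSum _ fun S _ => (integrable_const _).indicator (measurable_A S)]
  rw [Finset.sum_congr rfl (g := fun _ => ∫ ω, (V (n - k) ω) ^ k ∂P (n - k))]
  · simp [q, Nat.sub_add_cancel hk]
  · intro S hS
    rw [← P_A S k (Finset.mem_powersetCard.1 hS).2, integral_indicator_const _ (measurable_A S)]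
    simp [Measure.real]

theorem integrable_M {n : ℕ} (f : ℕ → ℝ) : Integrable (fun ω => f (M ω)) (P n) := by
  refine Integrable.of_bound (C := ∑ j ∈ Finset.range (n + 1), |f j|)
    ((measurable_from_nat.comp measurable_M).aestronglyMeasurable) ?_
  refine Filter.Eventually.of_forall fun ω => ?_
  exact Finset.single_le_sum (f := fun j => |f j|) (fun _ _ => abs_nonneg _)
    (Finset.mem_range.2 (Nat.lt_succ_of_le (M_le ω)))

theorem lhs_eq (n : ℕ) (x y : ℝ) :
    ∑ k ∈ Finset.range (n + 1), q (n - k) k * x ^ (n - k) * y ^ k =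
      ∫ ω, x ^ (n - M ω) * (x + y) ^ (M ω) ∂P n := by
  have h : ∀ ω : Fin n → ℝ × ℝ, x ^ (n - M ω) * (x + y) ^ (M ω) =
      ∑ k ∈ Finset.range (n + 1), ((M ω).choose k : ℝ) * (x ^ (n - k) * y ^ k) := by
    intro ω
    have hM := M_le ω
    rw [add_comm x y, add_pow, Finset.mul_sum]
    rw [← Finset.sum_subset (Finset.range_mono (Nat.succ_le_succ hM))]
    · refine Finset.sum_congr rfl fun k hk => ?_
      have hk' : k ≤ M ω := Nat.lt_succ_iff.1 (Finset.mem_range.1 hk)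
      have : n - k = (n - M ω) + (M ω - k) := by omega
      rw [this, pow_add]
      ring
    · intro k _ hk
      rw [Nat.choose_eq_zero_of_lt (by simpa using hk)]
      simp
  simp only [h]
  rw [integral_finsetSum]
  · refine Finset.sum_congr rfl fun k hk => ?_
    rw [integral_mul_const, int_choose n k (Nat.lt_succ_iff.1 (Finset.mem_range.1 hk))]
    ring
  · intro k _
    exact integrable_M (fun m => (m.choose k : ℝ) * (x ^ (n - k) * y ^ k))

theorem rhs_eq (n : ℕ) (x y : ℝ) :
    ∑ i ∈ Finset.range (n + 1), (P n {ω | N n ω = i}).toReal * x ^ i * (x + y) ^ (n - i) =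
      ∫ ω, x ^ (n - M ω) * (x + y) ^ (M ω) ∂P n := by
  have hms : ∀ i, MeasurableSet {ω : Fin n → ℝ × ℝ | n - M ω = i} := fun i =>
    (measurable_from_nat (f := fun m => n - m)).comp measurable_M (measurableSet_singleton i)
  have h : ∀ ω : Fin n → ℝ × ℝ, x ^ (n - M ω) * (x + y) ^ (M ω) =
      ∑ i ∈ Finset.range (n + 1), ({ω : Fin n → ℝ × ℝ | n - M ω = i}).indicator
        (fun _ => x ^ i * (x + y) ^ (n - i)) ω := by
    intro ω
    have hM := M_le ω
    simp only [Set.indicator_apply, Set.mem_setOf_eq]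
    rw [Finset.sum_ite_eq, if_pos (Finset.mem_range.2 (by omega)), Nat.sub_sub_self hM]
  simp only [h]
  rw [integral_finsetSum _ fun i _ => (integrable_const _).indicator (hms i)]
  refine Finset.sum_congr rfl fun i _ => ?_
  rw [integral_indicator_const _ (hms i)]
  have : P n {ω | N n ω = i} = P n {ω | n - M ω = i} := by
    apply measure_congr
    filter_upwards [ae_good n] with ω hω
    apply propext
    change N n ω = i ↔ n - M ω = i
    rw [N_eq hω]
  rw [this]
  simp [Measure.real, mul_assoc]

/-- `Σ_{k=0}^n q_{n-k,k} x^{n-k} y^k = Σ_{i=0}^n P(N_n = i) x^i (x+y)^{n-i}`,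
and if `x + y ≠ 0` this equals `(x+y)^n G_n(x/(x+y))`. -/
theorem stmt1 (n : ℕ) (x y : ℝ) :
    (∑ k ∈ Finset.range (n + 1), q (n - k) k * x ^ (n - k) * y ^ k
      = ∑ i ∈ Finset.range (n + 1),
          (P n {ω | N n ω = i}).toReal * x ^ i * (x + y) ^ (n - i)) ∧
    (x + y ≠ 0 →
      ∑ k ∈ Finset.range (n + 1), q (n - k) k * x ^ (n - k) * y ^ k
        = (x + y) ^ n * G n (x / (x + y))) := by
  refine ⟨(lhs_eq n x y).trans (rhs_eq n x y).symm, fun hxy => ?_⟩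
  rw [lhs_eq, G, ← integral_const_mul]
  refine integral_congr_ae ?_
  filter_upwards [ae_good n] with ω hω
  rw [N_eq hω]
  have hM := M_le ω
  have h1 : (x + y) ^ n = (x + y) ^ (n - M ω) * (x + y) ^ (M ω) := by
    rw [← pow_add, Nat.sub_add_cancel hM]
  rw [h1, div_pow]
  have h2 : (x + y) ^ (n - M ω) ≠ 0 := pow_ne_zero _ hxy
  field_simp

end
end

section
/- For all integers n ≥ 1 and k ≥ 2 the normalized moments satisfy the recurrence q_{n,k} = ((n+k+1)(n+k+2)/2)·q_{n+1,k} − (n+k)(n+k+1)·(q_{n,k} + q_{n+1,k−1}) + ((n+k−1)(n+k)/2)·(q_{n−1,k} + 2·q_{n,k−1} + q_{n+1,k−2}). -/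
open MeasureTheory

noncomputable section

/-! ### Geometry -/

lemma mem_T (z : ℝ × ℝ) : z ∈ T ↔ 0 ≤ z.1 ∧ 0 ≤ z.2 ∧ z.1 + z.2 ≤ 1 := by
  constructor
  · intro hz
    have hc : Convex ℝ {z : ℝ × ℝ | 0 ≤ z.1 ∧ 0 ≤ z.2 ∧ z.1 + z.2 ≤ 1} := by
      rintro ⟨x, y⟩ ⟨h1, h2, h3⟩ ⟨x', y'⟩ ⟨h1', h2', h3'⟩ a b ha hb hab
      simp only [Prod.smul_mk, Prod.mk_add_mk, smul_eq_mul, Set.mem_ofPred_eq] at *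
      refine ⟨by positivity, by positivity, ?_⟩
      nlinarith
    refine convexHull_min ?_ hc hz
    rintro w (rfl | rfl | rfl) <;> norm_num
  · rintro ⟨h1, h2, h3⟩
    have hc : Convex ℝ T := convex_convexHull ℝ _
    have m0 : ((0, 0) : ℝ × ℝ) ∈ T := subset_convexHull ℝ _ (by simp)
    have m1 : ((1, 0) : ℝ × ℝ) ∈ T := subset_convexHull ℝ _ (by simp)
    have m2 : ((0, 1) : ℝ × ℝ) ∈ T := subset_convexHull ℝ _ (by simp)
    have := hc.sum_mem (t := Finset.univ) (w := ![1 - z.1 - z.2, z.1, z.2])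
      (z := ![((0, 0) : ℝ × ℝ), (1, 0), (0, 1)])
      (by intro i _; fin_cases i <;> simp <;> linarith)
      (by simp [Fin.sum_univ_three]; ring)
      (by intro i _; fin_cases i <;> simpa)
    simpa [Fin.sum_univ_three] using this

/-- The affine map sending `(0,0), (1,0), (0,1)` to `(0,h), (s,(1-s)h), (0,1)`. -/
def ph (h s : ℝ) (z : ℝ × ℝ) : ℝ × ℝ := (s * z.1, h * (1 - s * z.1) + (1 - h) * z.2)

/-- The part of the triangle above the line through `(1,0)` and `(0,h)`. -/
def Del (h : ℝ) : Set (ℝ × ℝ) := {z | 0 ≤ z.1 ∧ h * (1 - z.1) ≤ z.2 ∧ z.1 + z.2 ≤ 1}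

def lf (h s : ℝ) (z : ℝ × ℝ) : ℝ := (1 - h) * z.1 + s * (z.2 - h * (1 - z.1)) - s * (1 - h)

def Bt (h s : ℝ) : Set (ℝ × ℝ) := {z | z ∈ Del h ∧ 0 ≤ lf h s z}

lemma ph_combo (h s a b : ℝ) (hab : a + b = 1) (z w : ℝ × ℝ) :
    ph h s (a • z + b • w) = a • ph h s z + b • ph h s w := by
  obtain rfl : b = 1 - a := by linarith
  ext <;> simp [ph] <;> ring

/-- `ph` as an affine map -/
def phA (h s : ℝ) : (ℝ × ℝ) →ᵃ[ℝ] (ℝ × ℝ) where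
  toFun := ph h s
  linear :=
    { toFun := fun z => (s * z.1, - h * s * z.1 + (1 - h) * z.2)
      map_add' := by intro z w; ext <;> simp <;> ring
      map_smul' := by intro a z; ext <;> simp <;> ring }
  map_vadd' := by intro z w; ext <;> simp [ph] <;> ring

lemma lf_combo (h s a b : ℝ) (hab : a + b = 1) (z w : ℝ × ℝ) :
    lf h s (a • z + b • w) = a * lf h s z + b * lf h s w := by
  obtain rfl : b = 1 - a := by linarith
  simp [lf]; ring

lemma lf_ph (h s : ℝ) (z : ℝ × ℝ) :
    lf h s (ph h s z) = s * (1 - h) * (z.1 + z.2 - 1) := by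
  simp [lf, ph]; ring

lemma convex_Del (h : ℝ) : Convex ℝ (Del h) := by
  rintro ⟨x, y⟩ ⟨h1, h2, h3⟩ ⟨x', y'⟩ ⟨h1', h2', h3'⟩ a b ha hb hab
  obtain rfl : b = 1 - a := by linarith
  simp only [Del, Prod.smul_mk, Prod.mk_add_mk, smul_eq_mul, Set.mem_ofPred_eq] at *
  refine ⟨by positivity, ?_, ?_⟩
  · nlinarith
  · nlinarith

lemma ph_mem_Del {h s : ℝ} (hh : 0 < h) (hh1 : h < 1) (hs : 0 < s) (hs1 : s ≤ 1) {z : ℝ × ℝ}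
    (hz : z ∈ T) : ph h s z ∈ Del h := by
  rw [mem_T] at hz
  obtain ⟨h1, h2, h3⟩ := hz
  simp only [Del, ph, Set.mem_ofPred_eq]
  refine ⟨by positivity, ?_, ?_⟩
  · nlinarith
  · have : s * z.1 ≤ z.1 := by nlinarith
    nlinarith

lemma exists_ph {h s : ℝ} (hh1 : h < 1) (hs : 0 < s) {z : ℝ × ℝ}
    (hz : z ∈ Del h) (hl : lf h s z ≤ 0) : ∃ w ∈ T, ph h s w = z := by
  obtain ⟨h1, h2, h3⟩ := hz
  have hu : 0 < 1 - h := by linarith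
  refine ⟨(z.1 / s, (z.2 - h * (1 - z.1)) / (1 - h)), ?_, ?_⟩
  · rw [mem_T]
    refine ⟨by positivity, div_nonneg (by linarith) hu.le, ?_⟩
    simp only [lf] at hl
    rw [div_add_div _ _ hs.ne' hu.ne', div_le_one (by positivity)]
    linarith
  · have := hs.ne'
    have := hu.ne'
    ext
    · simp [ph]; field_simp
    · simp [ph]; field_simp; ring

lemma Bt_subset {h s : ℝ} (hh1 : h < 1) (hs1 : s < 1) :
    Bt h s ⊆ convexHull ℝ {(s, h * (1 - s)), (1, 0), (0, 1)} := by
  rintro ⟨x, y⟩ ⟨⟨h1, h2, h3⟩, hl⟩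
  simp only [lf] at *
  set K := convexHull ℝ {((s, h * (1 - s)) : ℝ × ℝ), (1, 0), (0, 1)} with hK
  have hc : Convex ℝ K := convex_convexHull ℝ _
  have m0 : ((s, h * (1 - s)) : ℝ × ℝ) ∈ K := subset_convexHull ℝ _ (by simp)
  have m1 : ((1, 0) : ℝ × ℝ) ∈ K := subset_convexHull ℝ _ (by simp)
  have m2 : ((0, 1) : ℝ × ℝ) ∈ K := subset_convexHull ℝ _ (by simp)
  have hu : 0 < 1 - h := by linarith
  have hs2 : 0 < 1 - s := by linarith
  -- barycentric coordinates
  set a := (1 - x - y) / ((1 - h) * (1 - s)) with ha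
  set b := ((1 - h) * x + s * (y - h * (1 - x)) - s * (1 - h)) / ((1 - h) * (1 - s)) with hb
  set d := (y - h * (1 - x)) / (1 - h) with hd
  have ha0 : 0 ≤ a := div_nonneg (by linarith) (by positivity)
  have hb0 : 0 ≤ b := div_nonneg (by linarith) (by positivity)
  have hd0 : 0 ≤ d := div_nonneg (by linarith) (by positivity)
  have hsum : a + b + d = 1 := by
    rw [ha, hb, hd]; field_simp; ring
  have := hc.sum_mem (t := Finset.univ) (w := ![a, b, d])
      (z := ![((s, h * (1 - s)) : ℝ × ℝ), (1, 0), (0, 1)])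
      (by intro i _; fin_cases i <;> simpa)
      (by simpa [Fin.sum_univ_three])
      (by intro i _; fin_cases i <;> simpa)
  have e : (x, y) = ∑ i, (![a, b, d] i) • (![((s, h * (1 - s)) : ℝ × ℝ), (1, 0), (0, 1)] i) := by
    simp only [Fin.sum_univ_three, Matrix.cons_val]
    ext
    · simp; rw [ha, hb]; field_simp; ring
    · simp; rw [ha, hd]; field_simp; ring
  rw [e]; exact this

/-- gluing two convex sets along a line -/
lemma convex_glue {A B K : Set (ℝ × ℝ)} (f : ℝ × ℝ → ℝ)
    (hf : ∀ a b : ℝ, a + b = 1 → ∀ z w, f (a • z + b • w) = a * f z + b * f w)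
    (hA : Convex ℝ A) (hB : Convex ℝ B) (hK : Convex ℝ K) (hAK : A ⊆ K) (hBK : B ⊆ K)
    (hA0 : ∀ z ∈ A, f z ≤ 0) (hB0 : ∀ z ∈ B, 0 ≤ f z)
    (h0 : ∀ z ∈ K, f z = 0 → z ∈ A ∧ z ∈ B) : Convex ℝ (A ∪ B) := by
  have key : ∀ z ∈ A, ∀ w ∈ B, ∀ a b : ℝ, 0 ≤ a → 0 ≤ b → a + b = 1 →
      a • z + b • w ∈ A ∪ B := by
    intro z hz w hw a b ha hb hab
    have hz0 := hA0 z hz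
    have hw0 := hB0 w hw
    by_cases hzz : f z = 0
    · exact Or.inr (hB (h0 z (hAK hz) hzz).2 hw ha hb hab)
    have hzn : f z < 0 := lt_of_le_of_ne hz0 hzz
    have hD : 0 < f w - f z := by linarith
    set c := f w / (f w - f z) with hc
    set d := - f z / (f w - f z) with hd
    have hcd : c + d = 1 := by rw [hc, hd]; field_simp; ring
    have hc0 : 0 ≤ c := div_nonneg hw0 hD.le
    have hd0 : 0 < d := div_pos (by linarith) hD
    set m := c • z + d • w with hm
    have hmK : m ∈ K := hK (hAK hz) (hBK hw) hc0 hd0.le hcd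
    have hfm : f m = 0 := by
      rw [hm, hf c d hcd, hc, hd]; field_simp; ring
    obtain ⟨mA, mB⟩ := h0 m hmK hfm
    have hd1 : d = 1 - c := by linarith
    have hb1 : b = 1 - a := by linarith
    by_cases hac : c ≤ a
    · left
      have hd0' : 0 < 1 - c := by linarith
      have : a • z + b • w = ((a - c) / (1 - c)) • z + (b / (1 - c)) • m := by
        rw [hm, hd1, hb1]
        ext <;> simp <;> field_simp <;> ring
      rw [this]
      refine hA hz mA (div_nonneg (by linarith) hd0'.le) (div_nonneg hb hd0'.le) ?_
      rw [← add_div, div_eq_one_iff_eq hd0'.ne']; linarith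
    · right
      push Not at hac
      have hc' : 0 < c := by linarith
      have : a • z + b • w = (a / c) • m + ((c - a) / c) • w := by
        rw [hm, hd1, hb1]
        ext <;> simp <;> field_simp <;> ring
      rw [this]
      refine hB mB hw (by positivity) (div_nonneg (by linarith) hc'.le) ?_
      field_simp; ring
  rintro z (hz | hz) w (hw | hw) a b ha hb hab
  · exact Or.inl (hA hz hw ha hb hab)
  · exact key z hz w hw a b ha hb hab
  · rw [add_comm]; exact key w hw z hz b a hb ha (by linarith)
  · exact Or.inr (hB hz hw ha hb hab)

lemma convex_Bt (h s : ℝ) : Convex ℝ (Bt h s) := by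
  rintro z ⟨hz, hz'⟩ w ⟨hw, hw'⟩ a b ha hb hab
  refine ⟨convex_Del h hz hw ha hb hab, ?_⟩
  rw [lf_combo h s a b hab]; positivity

lemma chain_hull_eq {h s : ℝ} (hh : 0 < h) (hh1 : h < 1) (hs : 0 < s) (hs1 : s < 1)
    {W : Set (ℝ × ℝ)} (hW : W ⊆ T) :
    convexHull ℝ (ph h s '' W ∪ {(s, h * (1 - s)), (1, 0), (0, 1)}) =
      ph h s '' (convexHull ℝ (W ∪ {(1, 0), (0, 1)})) ∪ Bt h s := by
  have hu : 0 < 1 - h := by linarith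
  have hKT : convexHull ℝ (W ∪ {(1, 0), (0, 1)}) ⊆ T := by
    refine convexHull_min (Set.union_subset hW ?_) (convex_convexHull ℝ _)
    rintro z (rfl | rfl) <;> simp [mem_T]
  have e10 : ph h s (1, 0) = (s, h * (1 - s)) := by ext <;> simp [ph]
  have e01 : ph h s (0, 1) = (0, 1) := by ext <;> simp [ph]
  have him : ph h s '' (convexHull ℝ (W ∪ {(1, 0), (0, 1)})) =
      convexHull ℝ (ph h s '' W ∪ {(s, h * (1 - s)), (0, 1)}) := by
    have := (phA h s).image_convexHull (W ∪ {(1, 0), (0, 1)})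
    change ph h s '' _ = convexHull ℝ (ph h s '' _) at this
    rw [this, Set.image_union, Set.image_pair, e10, e01]
  apply Set.Subset.antisymm
  · refine convexHull_min ?_ ?_
    · rintro z (⟨w, hw, rfl⟩ | rfl | rfl | rfl)
      · exact Or.inl ⟨w, subset_convexHull ℝ _ (Or.inl hw), rfl⟩
      · exact Or.inl ⟨(1, 0), subset_convexHull ℝ _ (by simp), e10⟩
      · right
        simp only [Bt, Del, lf, Set.mem_ofPred_eq]
        refine ⟨by norm_num, ?_⟩
        nlinarith
      · exact Or.inl ⟨(0, 1), subset_convexHull ℝ _ (by simp), e01⟩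
    · refine convex_glue (lf h s) (lf_combo h s) ?_ (convex_Bt h s) (convex_Del h) ?_
        (fun z hz => hz.1) ?_ (fun z hz => hz.2) ?_
      · rw [him]; exact convex_convexHull ℝ _
      · rintro _ ⟨w, hw, rfl⟩
        exact ph_mem_Del hh hh1 hs hs1.le (hKT hw)
      · rintro _ ⟨w, hw, rfl⟩
        rw [lf_ph]
        have := (mem_T w).1 (hKT hw)
        have h2 : 0 < s * (1 - h) := by positivity
        nlinarith
      · intro z hz h0
        refine ⟨?_, hz, h0.ge⟩
        obtain ⟨w, hw, rfl⟩ := exists_ph hh1 hs hz h0.le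
        refine ⟨w, ?_, rfl⟩
        rw [lf_ph] at h0
        have h2 : s * (1 - h) ≠ 0 := by positivity
        have h3 : w.1 + w.2 = 1 := by
          have := (mul_eq_zero.1 h0).resolve_left h2
          linarith
        obtain ⟨g1, g2, -⟩ := (mem_T w).1 hw
        have := (convex_convexHull ℝ (W ∪ {((1 : ℝ), (0 : ℝ)), (0, 1)}))
          (subset_convexHull ℝ _ (by simp : ((1 : ℝ), (0 : ℝ)) ∈ _))
          (subset_convexHull ℝ _ (by simp : ((0 : ℝ), (1 : ℝ)) ∈ _)) g1 g2 h3
        simpa using this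
  · refine Set.union_subset ?_ ?_
    · rw [him]
      apply convexHull_mono
      rintro z (hz | rfl | rfl)
      · exact Or.inl hz
      · simp
      · simp
    · exact (Bt_subset hh1 hs1).trans (convexHull_mono Set.subset_union_right)

/-! ### Measure of affine images -/

lemma measurable_ph (h s : ℝ) : Measurable (ph h s) := by
  unfold ph; fun_prop

lemma map_ph {h s : ℝ} (hh1 : h < 1) (hs : 0 < s) :
    (volume : Measure (ℝ × ℝ)).map (ph h s) = ENNReal.ofReal ((s * (1 - h))⁻¹) • volume := by
  have hu : 0 < 1 - h := by linarith
  have e : ph h s = (fun z : ℝ × ℝ => (z.1, h * (1 - z.1) + z.2)) ∘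
      (Prod.map (fun x => s * x) (fun y => (1 - h) * y)) := by
    funext z; simp [ph]
  have hsk : MeasurePreserving (fun z : ℝ × ℝ => (z.1, h * (1 - z.1) + z.2))
      (volume.prod volume) (volume.prod volume) := by
    refine (MeasurePreserving.id (volume : Measure ℝ)).skew_product
      (g := fun x y => h * (1 - x) + y) (by fun_prop) ?_
    exact Filter.Eventually.of_forall fun x => map_add_left_eq_self volume _
  rw [e, ← Measure.map_map hsk.measurable (by fun_prop), Measure.volume_eq_prod,
    ← Measure.map_prod_map _ _ (by fun_prop) (by fun_prop),
    Real.map_volume_mul_left hs.ne', Real.map_volume_mul_left hu.ne',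
    Measure.prod_smul_left, Measure.prod_smul_right, smul_smul, Measure.map_smul, hsk.map_eq]
  congr 1
  rw [← ENNReal.ofReal_mul (by positivity), abs_of_pos (by positivity), abs_of_pos (by positivity),
    mul_inv]

lemma ph_injective {h s : ℝ} (hh1 : h < 1) (hs : 0 < s) : Function.Injective (ph h s) := by
  rintro ⟨x, y⟩ ⟨x', y'⟩ he
  have hu : 1 - h ≠ 0 := by linarith
  simp only [ph, Prod.mk.injEq] at he
  obtain ⟨h1, h2⟩ := he
  rw [h1] at h2
  have h3 := mul_left_cancel₀ hs.ne' h1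
  have h4 := mul_left_cancel₀ hu (add_left_cancel h2)
  rw [h3, h4]

lemma ph_emb {h s : ℝ} (hh1 : h < 1) (hs : 0 < s) : MeasurableEmbedding (ph h s) :=
  (measurable_ph h s).measurableEmbedding (ph_injective hh1 hs)

lemma volume_eq_smul {h s : ℝ} (hh1 : h < 1) (hs : 0 < s) :
    (volume : Measure (ℝ × ℝ)) = ENNReal.ofReal (s * (1 - h)) • volume.map (ph h s) := by
  have hu : 0 < 1 - h := by linarith
  rw [map_ph hh1 hs, smul_smul, ← ENNReal.ofReal_mul (by positivity),
    mul_inv_cancel₀ (by positivity), ENNReal.ofReal_one, one_smul]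

lemma volume_image_ph {h s : ℝ} (hh1 : h < 1) (hs : 0 < s) (A : Set (ℝ × ℝ)) :
    volume (ph h s '' A) = ENNReal.ofReal (s * (1 - h)) * volume A := by
  conv_lhs => rw [volume_eq_smul hh1 hs]
  rw [Measure.smul_apply, (ph_emb hh1 hs).map_apply, (ph_injective hh1 hs).preimage_image,
    smul_eq_mul]

lemma measurableSet_T : MeasurableSet T := by
  have : T = {z : ℝ × ℝ | 0 ≤ z.1} ∩ ({z | 0 ≤ z.2} ∩ {z | z.1 + z.2 ≤ 1}) := by
    ext z; rw [mem_T]; rfl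
  rw [this]
  exact (measurableSet_le (by fun_prop) (by fun_prop)).inter
    ((measurableSet_le (by fun_prop) (by fun_prop)).inter
    (measurableSet_le (by fun_prop) (by fun_prop)))

lemma measurableSet_Del (h : ℝ) : MeasurableSet (Del h) := by
  have : Del h = {z : ℝ × ℝ | 0 ≤ z.1} ∩ ({z | h * (1 - z.1) ≤ z.2} ∩ {z | z.1 + z.2 ≤ 1}) := rfl
  rw [this]
  exact (measurableSet_le (by fun_prop) (by fun_prop)).inter
    ((measurableSet_le (by fun_prop) (by fun_prop)).inter
    (measurableSet_le (by fun_prop) (by fun_prop)))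

lemma measurableSet_Bt (h s : ℝ) : MeasurableSet (Bt h s) := by
  have : Bt h s = Del h ∩ {z | 0 ≤ lf h s z} := rfl
  rw [this]
  refine (measurableSet_Del h).inter (measurableSet_le (by fun_prop) ?_)
  unfold lf; fun_prop

lemma lintegral_T (f : ℝ × ℝ → ENNReal) (hf : Measurable f) :
    ∫⁻ z, f z ∂μT = 2 * ∫⁻ x in Set.Ioo (0 : ℝ) 1, ∫⁻ y in Set.Icc 0 (1 - x), f (x, y) := by
  rw [μT, lintegral_smul_measure, smul_eq_mul, ← lintegral_indicator measurableSet_T,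
    Measure.volume_eq_prod, lintegral_prod _ ((hf.indicator measurableSet_T).aemeasurable),
    ← lintegral_indicator measurableSet_Ioo]
  congr 1
  have h0 : ∀ᵐ x : ℝ, x ≠ 0 ∧ x ≠ 1 := by
    have := (Set.toFinite ({0, 1} : Set ℝ)).measure_zero volume
    filter_upwards [measure_eq_zero_iff_ae_notMem.1 this] with x hx
    simpa using hx
  apply lintegral_congr_ae
  filter_upwards [h0] with x ⟨hx0, hx1⟩
  by_cases hx : x ∈ Set.Ioo (0 : ℝ) 1
  · rw [Set.indicator_of_mem hx, ← lintegral_indicator measurableSet_Icc]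
    congr 1; funext y
    have : ((x, y) ∈ T) ↔ y ∈ Set.Icc 0 (1 - x) := by
      rw [mem_T, Set.mem_Icc]; constructor
      · rintro ⟨h1, h2, h3⟩; exact ⟨h2, by simp at h3; linarith⟩
      · rintro ⟨h1, h2⟩; exact ⟨hx.1.le, h1, by simp; linarith⟩
    by_cases hy : y ∈ Set.Icc 0 (1 - x)
    · rw [Set.indicator_of_mem hy, Set.indicator_of_mem (this.2 hy)]
    · rw [Set.indicator_of_notMem hy, Set.indicator_of_notMem (mt this.1 hy)]
  · rw [Set.indicator_of_notMem hx]
    rw [lintegral_eq_zero_iff' ?_]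
    · refine Filter.Eventually.of_forall fun y => ?_
      apply Set.indicator_of_notMem
      intro hm
      rw [mem_T] at hm
      obtain ⟨h1, h2, h3⟩ := hm
      simp only at h1 h2 h3
      exact hx ⟨lt_of_le_of_ne h1 (Ne.symm hx0), lt_of_le_of_ne (by linarith) hx1⟩
    · exact ((hf.indicator measurableSet_T).comp (by fun_prop)).aemeasurable

lemma beta_int (a b : ℕ) : ∫ x in (0 : ℝ)..1, x ^ b * (1 - x) ^ a =
    (a.factorial * b.factorial : ℝ) / (a + b + 1).factorial := by
  induction a generalizing b with
  | zero =>
    simp [Nat.factorial_succ]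
    have : (b.factorial : ℝ) ≠ 0 := by positivity
    field_simp
  | succ a ih =>
    have key := intervalIntegral.integral_mul_deriv_eq_deriv_mul (a := (0 : ℝ)) (b := 1)
      (u := fun x => (1 - x) ^ (a + 1)) (u' := fun x => - ((a + 1 : ℝ) * (1 - x) ^ a))
      (v := fun x => x ^ (b + 1) / (b + 1)) (v' := fun x => x ^ b)
      (by
        intro x _
        have := ((hasDerivAt_id x).const_sub 1).pow (a + 1)
        refine this.congr_deriv ?_
        simp)
      (by
        intro x _
        have := ((hasDerivAt_id x).pow (b + 1)).div_const ((b : ℝ) + 1)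
        refine this.congr_deriv ?_
        have : (b : ℝ) + 1 ≠ 0 := by positivity
        simp; field_simp)
      (by apply Continuous.intervalIntegrable; fun_prop)
      (by apply Continuous.intervalIntegrable; fun_prop)
    have e1 : ∫ x in (0 : ℝ)..1, x ^ b * (1 - x) ^ (a + 1) =
        ∫ x in (0 : ℝ)..1, (1 - x) ^ (a + 1) * x ^ b := by
      congr 1; funext x; ring
    have e2 : ∀ x : ℝ, -((a + 1 : ℝ) * (1 - x) ^ a) * (x ^ (b + 1) / (b + 1)) =
        (-((a + 1 : ℝ) / (b + 1))) * (x ^ (b + 1) * (1 - x) ^ a) := by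
      intro x; ring
    rw [e1, key]
    simp_rw [e2]
    rw [intervalIntegral.integral_const_mul, ih (b + 1)]
    have e3 : a + (b + 1) + 1 = a + 1 + b + 1 := by ring
    rw [e3, Nat.factorial_succ a, Nat.factorial_succ b]
    have : (b : ℝ) + 1 ≠ 0 := by positivity
    simp
    field_simp

lemma inner_int (m : ℕ) {L : ℝ} (hL : 0 < L) :
    ∫⁻ y in Set.Icc 0 L, ENNReal.ofReal ((L - y) ^ m) = ENNReal.ofReal (L ^ (m + 1) / (m + 1)) := by
  rw [← ofReal_integral_eq_lintegral_ofReal]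
  · rw [integral_Icc_eq_integral_Ioc, ← intervalIntegral.integral_of_le hL.le,
      intervalIntegral.integral_comp_sub_left (fun y => y ^ m)]
    simp
  · exact (by fun_prop : Continuous fun y : ℝ => (L - y) ^ m).continuousOn.integrableOn_Icc
  · filter_upwards [ae_restrict_mem measurableSet_Icc] with y hy
    exact pow_nonneg (by linarith [hy.2]) _

/-- slope -/
def hh (p : ℝ × ℝ) : ℝ := p.2 / (1 - p.1)

lemma measurable_hh : Measurable hh := by unfold hh; fun_prop

lemma beta_T (a b : ℕ) :
    ∫⁻ p, ENNReal.ofReal ((1 - hh p) * (1 - p.1)) ^ a * ENNReal.ofReal (p.1 * (1 - hh p)) ^ b ∂μT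
      = ENNReal.ofReal (2 * ((a + 1).factorial * b.factorial) /
        ((a + b + 1) * (a + b + 2).factorial)) := by
  have hm := measurable_hh
  rw [lintegral_T _ (by fun_prop)]
  have e1 : ∀ x ∈ Set.Ioo (0 : ℝ) 1, ∫⁻ y in Set.Icc 0 (1 - x),
      ENNReal.ofReal ((1 - hh (x, y)) * (1 - x)) ^ a * ENNReal.ofReal (x * (1 - hh (x, y))) ^ b
      = ENNReal.ofReal (((a : ℝ) + b + 1)⁻¹ * (x ^ b * (1 - x) ^ (a + 1))) := by
    intro x hx
    have hL : 0 < 1 - x := by linarith [hx.2]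
    have hx0 := hx.1
    have : ∀ y ∈ Set.Icc 0 (1 - x),
        ENNReal.ofReal ((1 - hh (x, y)) * (1 - x)) ^ a * ENNReal.ofReal (x * (1 - hh (x, y))) ^ b
        = ENNReal.ofReal (x ^ b / (1 - x) ^ b) * ENNReal.ofReal ((1 - x - y) ^ (a + b)) := by
      intro y hy
      have h1 : (1 - hh (x, y)) = (1 - x - y) / (1 - x) := by
        simp only [hh]; field_simp
      have h2 : 0 ≤ 1 - x - y := by linarith [hy.2]
      rw [h1, ← ENNReal.ofReal_pow (by positivity), ← ENNReal.ofReal_pow (by positivity),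
        ← ENNReal.ofReal_mul (by positivity), ← ENNReal.ofReal_mul (by positivity)]
      congr 1
      rw [div_mul_cancel₀ _ hL.ne', mul_div_assoc', div_pow, mul_pow, pow_add]
      ring
    rw [setLIntegral_congr_fun measurableSet_Icc this, lintegral_const_mul _ (by fun_prop),
      inner_int _ hL, ← ENNReal.ofReal_mul (by positivity)]
    congr 1
    push_cast
    field_simp
    ring
  rw [setLIntegral_congr_fun measurableSet_Ioo e1, ← ofReal_integral_eq_lintegral_ofReal]
  · rw [← integral_Ioc_eq_integral_Ioo, ← intervalIntegral.integral_of_le zero_le_one,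
      intervalIntegral.integral_const_mul, beta_int,
      show (2 : ENNReal) = ENNReal.ofReal 2 by simp, ← ENNReal.ofReal_mul (by norm_num)]
    congr 1
    rw [show a + 1 + b + 1 = a + b + 2 by ring]
    field_simp
  · exact ((by fun_prop : Continuous fun x : ℝ => ((a : ℝ) + b + 1)⁻¹ * (x ^ b * (1 - x) ^ (a + 1))).continuousOn.integrableOn_Icc).mono_set Set.Ioo_subset_Icc_self
  · filter_upwards [ae_restrict_mem measurableSet_Ioo] with x hx
    have hL : 0 ≤ 1 - x := by linarith [hx.2]
    have hx0 := hx.1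
    positivity

instance prob_μT : IsProbabilityMeasure μT := by
  constructor
  have := beta_T 0 0
  simpa using this

lemma volume_T : 2 * volume T = 1 := by
  have := measure_univ (μ := μT)
  simpa [μT] using this

instance prob_P (n : ℕ) : IsProbabilityMeasure (P n) := by unfold P; infer_instance

lemma ae_T : ∀ᵐ z ∂μT, z ∈ T := by
  rw [μT]
  exact Measure.ae_smul_measure (ae_restrict_mem measurableSet_T) _

lemma ac_μT : μT ≪ volume := by
  rw [μT]
  exact (Measure.smul_absolutelyContinuous).trans Measure.restrict_le_self.absolutelyContinuous

lemma volume_line (f : ℝ → ℝ) (hf : Measurable f) : volume {z : ℝ × ℝ | z.2 = f z.1} = 0 := by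
  rw [Measure.volume_eq_prod, Measure.measure_prod_null (measurableSet_eq_fun (by fun_prop) (by fun_prop))]
  refine Filter.Eventually.of_forall fun x => ?_
  have : (Prod.mk x ⁻¹' {z : ℝ × ℝ | z.2 = f z.1}) = {f x} := by ext y; simp
  change volume (Prod.mk x ⁻¹' {z : ℝ × ℝ | z.2 = f z.1}) = 0
  rw [this]; simp

lemma volume_vline (a : ℝ) : volume {z : ℝ × ℝ | z.1 = a} = 0 := by
  have : {z : ℝ × ℝ | z.1 = a} = {a} ×ˢ Set.univ := by ext; simp
  rw [this, Measure.volume_eq_prod, Measure.prod_prod]; simp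

lemma ae_hh_ne (c : ℝ) : ∀ᵐ z ∂μT, hh z ≠ c := by
  have h1 := ac_μT.ae_le (measure_eq_zero_iff_ae_notMem.1 (volume_vline 1))
  have h2 := ac_μT.ae_le (measure_eq_zero_iff_ae_notMem.1
    (volume_line (fun x => c * (1 - x)) (by fun_prop)))
  filter_upwards [h1, h2] with z hz1 hz2 hc
  apply hz2
  have : 1 - z.1 ≠ 0 := fun h => hz1 (show z.1 = 1 by linarith)
  simp only [hh] at hc
  rw [div_eq_iff this] at hc
  exact hc

lemma ae_good_s2 : ∀ᵐ z ∂μT, z ∈ T ∧ 0 < z.1 ∧ z.1 < 1 ∧ 0 < hh z ∧ hh z < 1 := by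
  have h1 := ac_μT.ae_le (measure_eq_zero_iff_ae_notMem.1 (volume_vline 1))
  have h0 := ac_μT.ae_le (measure_eq_zero_iff_ae_notMem.1 (volume_vline 0))
  filter_upwards [h1, h0, ae_T, ae_hh_ne 0, ae_hh_ne 1] with z hz1 hz0 hT hh0 hh1
  obtain ⟨g1, g2, g3⟩ := (mem_T z).1 hT
  have g4 : z.1 ≠ 1 := hz1
  have g5 : z.1 ≠ 0 := hz0
  have g6 : z.1 < 1 := lt_of_le_of_ne (by linarith) g4
  refine ⟨hT, lt_of_le_of_ne g1 g5.symm, g6, lt_of_le_of_ne ?_ hh0.symm, lt_of_le_of_ne ?_ hh1⟩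
  · exact div_nonneg g2 (by linarith)
  · unfold hh; rw [div_le_one (by linarith)]; linarith

/-! ### Decomposition of the measure above a point -/

lemma Del_subset_T {h : ℝ} (hh : 0 < h) (hh1 : h < 1) : Del h ⊆ T := by
  rintro ⟨x, y⟩ ⟨h1, h2, h3⟩
  rw [mem_T]
  simp only at *
  by_cases hx : x ≤ 1
  · exact ⟨h1, by nlinarith, h3⟩
  · push Not at hx
    exfalso
    nlinarith

lemma Del_eq {h s : ℝ} (hh : 0 < h) (hh1 : h < 1) (hs : 0 < s) (hs1 : s < 1) :
    Del h = ph h s '' T ∪ (Bt h s \ ph h s '' T) := by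
  ext z
  constructor
  · intro hz
    by_cases hl : lf h s z ≤ 0
    · left
      obtain ⟨w, hw, rfl⟩ := exists_ph hh1 hs hz hl
      exact ⟨w, hw, rfl⟩
    · by_cases hz' : z ∈ ph h s '' T
      · exact Or.inl hz'
      · exact Or.inr ⟨⟨hz, by linarith⟩, hz'⟩
  · rintro (⟨w, hw, rfl⟩ | ⟨hz, -⟩)
    · exact ph_mem_Del hh hh1 hs hs1.le hw
    · exact hz.1

lemma Del_eq_one {h : ℝ} (hh : 0 < h) (hh1 : h < 1) : Del h = ph h 1 '' T := by
  ext z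
  constructor
  · intro hz
    have : lf h 1 z ≤ 0 := by
      obtain ⟨h1, h2, h3⟩ := hz
      simp only [lf]; nlinarith
    obtain ⟨w, hw, rfl⟩ := exists_ph hh1 one_pos hz this
    exact ⟨w, hw, rfl⟩
  · rintro ⟨w, hw, rfl⟩
    exact ph_mem_Del hh hh1 one_pos le_rfl hw

lemma measurableSet_im {h s : ℝ} (hh1 : h < 1) (hs : 0 < s) : MeasurableSet (ph h s '' T) :=
  (ph_emb hh1 hs).measurableSet_image.2 measurableSet_T

lemma μT_Del {h : ℝ} (hh : 0 < h) (hh1 : h < 1) : μT (Del h) = ENNReal.ofReal (1 - h) := by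
  have h1 : μT (Del h) = 2 * volume (Del h) := by
    rw [μT, Measure.smul_apply, Measure.restrict_apply (measurableSet_Del h),
      Set.inter_eq_left.2 (Del_subset_T hh hh1), smul_eq_mul]
  rw [h1, Del_eq_one hh hh1, volume_image_ph hh1 one_pos, mul_left_comm, volume_T]
  simp

/-- remainder measure, carried by `Bt` -/
def rho (h s : ℝ) : Measure (ℝ × ℝ) := μT.restrict (Bt h s \ ph h s '' T)

lemma decomp {h s : ℝ} (hh : 0 < h) (hh1 : h < 1) (hs : 0 < s) (hs1 : s < 1) :
    μT.restrict (Del h) = ENNReal.ofReal (s * (1 - h)) • μT.map (ph h s) + rho h s := by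
  have hd := Del_eq hh hh1 hs hs1
  rw [hd, Measure.restrict_union Set.disjoint_sdiff_right
    ((measurableSet_Bt h s).diff (measurableSet_im hh1 hs)), rho]
  congr 1
  have hsub : ph h s '' T ⊆ T := by
    refine subset_trans ?_ (Del_subset_T hh hh1)
    rw [hd]; exact Set.subset_union_left
  rw [μT, Measure.restrict_smul, Measure.restrict_restrict (measurableSet_im hh1 hs),
    Set.inter_eq_left.2 hsub, Measure.map_smul, smul_comm]
  congr 1
  conv_lhs => rw [volume_eq_smul hh1 hs]
  rw [Measure.restrict_smul, (ph_emb hh1 hs).restrict_map, (ph_injective hh1 hs).preimage_image]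

lemma rho_univ {h s : ℝ} (hh : 0 < h) (hh1 : h < 1) (hs : 0 < s) (hs1 : s < 1) :
    rho h s Set.univ = ENNReal.ofReal ((1 - h) * (1 - s)) := by
  have h1 := congrArg (fun m => m Set.univ) (decomp hh hh1 hs hs1)
  have hp : IsProbabilityMeasure (μT.map (ph h s)) :=
    Measure.isProbabilityMeasure_map (measurable_ph h s).aemeasurable
  simp only [Measure.restrict_apply_univ, Measure.add_apply, Measure.smul_apply, measure_univ,
    smul_eq_mul, mul_one, μT_Del hh hh1] at h1
  have h2 : ENNReal.ofReal (1 - h) = ENNReal.ofReal (s * (1 - h)) +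
      ENNReal.ofReal ((1 - h) * (1 - s)) := by
    rw [← ENNReal.ofReal_add]
    · congr 1; ring
    · exact mul_nonneg hs.le (by linarith)
    · exact mul_nonneg (by linarith) (by linarith)
  rw [h2] at h1
  exact ((ENNReal.add_right_inj ENNReal.ofReal_ne_top).1 h1).symm

lemma overlap {h s : ℝ} (hh1 : h < 1) (hs : 0 < s) :
    volume (Bt h s ∩ ph h s '' T) = 0 := by
  refine measure_mono_null (t := ph h s '' {z | z.2 = 1 - z.1}) ?_ ?_
  · rintro _ ⟨⟨h1, h2⟩, ⟨w, hw, rfl⟩⟩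
    refine ⟨w, ?_, rfl⟩
    rw [lf_ph] at h2
    obtain ⟨-, -, g3⟩ := (mem_T w).1 hw
    have : 0 < s * (1 - h) := mul_pos hs (by linarith)
    have : 0 ≤ w.1 + w.2 - 1 := nonneg_of_mul_nonneg_right h2 this
    simp only [Set.mem_ofPred_eq]; linarith
  · rw [volume_image_ph hh1 hs, volume_line (fun x => 1 - x) (by fun_prop), mul_zero]

lemma volume_Bt {h s : ℝ} (hh : 0 < h) (hh1 : h < 1) (hs : 0 < s) (hs1 : s < 1) :
    2 * volume (Bt h s) = ENNReal.ofReal ((1 - h) * (1 - s)) := by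
  rw [← rho_univ hh hh1 hs hs1, rho, Measure.restrict_apply_univ, μT, Measure.smul_apply,
    Measure.restrict_apply ((measurableSet_Bt h s).diff (measurableSet_im hh1 hs)),
    Set.inter_eq_left.2 (fun z hz => Del_subset_T hh hh1 hz.1.1), smul_eq_mul,
    ← measure_inter_add_sdiff (Bt h s) (measurableSet_im hh1 hs), overlap hh1 hs, zero_add]

lemma rho_ae (h s : ℝ) (hh1 : h < 1) (hs : 0 < s) : ∀ᵐ z ∂(rho h s), z ∈ Bt h s := by
  have := ae_restrict_mem (μ := μT) ((measurableSet_Bt h s).diff (measurableSet_im hh1 hs))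
  filter_upwards [this] with z hz using hz.1

lemma volume_hull {h s : ℝ} (hh : 0 < h) (hh1 : h < 1) (hs : 0 < s) (hs1 : s < 1)
    {W : Set (ℝ × ℝ)} (hW : W ⊆ T) :
    2 * volume (convexHull ℝ (ph h s '' W ∪ {(s, h * (1 - s)), (1, 0), (0, 1)})) =
      ENNReal.ofReal ((1 - h) * (1 - s)) +
      ENNReal.ofReal (s * (1 - h)) * (2 * volume (convexHull ℝ (W ∪ {(1, 0), (0, 1)}))) := by
  have hKT : convexHull ℝ (W ∪ {(1, 0), (0, 1)}) ⊆ T := by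
    refine convexHull_min (Set.union_subset hW ?_) (convex_convexHull ℝ _)
    rintro z (rfl | rfl) <;> simp [mem_T]
  rw [chain_hull_eq hh hh1 hs hs1 hW, Set.union_comm, measure_union₀', volume_image_ph hh1 hs,
    mul_add, volume_Bt hh hh1 hs hs1, mul_left_comm]
  · exact (measurableSet_Bt h s).nullMeasurableSet
  · refine measure_mono_null ?_ (overlap hh1 hs)
    exact Set.inter_subset_inter_right _ (Set.image_mono hKT)

/-! ### Splitting integrals over independent points -/

lemma lintegral_pi_succ {n : ℕ} (ν : Measure (ℝ × ℝ)) [IsFiniteMeasure ν] (i : Fin (n + 1))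
    (f : (Fin (n + 1) → ℝ × ℝ) → ENNReal) (hf : Measurable f) :
    ∫⁻ ω, f ω ∂(Measure.pi fun _ : Fin (n + 1) => ν) =
      ∫⁻ x, ∫⁻ ω, f (i.insertNth x ω) ∂(Measure.pi fun _ : Fin n => ν) ∂ν := by
  have mp := (measurePreserving_piFinSuccAbove (fun _ : Fin (n + 1) => ν) i).symm
  rw [← mp.lintegral_comp hf, lintegral_prod]
  · rfl
  · exact (hf.comp mp.measurable).aemeasurable

lemma range_insertNth {n : ℕ} (i : Fin (n + 1)) (x : ℝ × ℝ) (ω : Fin n → ℝ × ℝ) :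
    Set.range (i.insertNth x ω : Fin (n + 1) → ℝ × ℝ) = insert x (Set.range ω) := by
  ext z
  simp only [Set.mem_range, Set.mem_insert_iff, Fin.exists_iff_succAbove i,
    Fin.insertNth_apply_same, Fin.insertNth_apply_succAbove]
  tauto

lemma measurable_insertNth {n : ℕ} (i : Fin (n + 1)) :
    Measurable fun z : (ℝ × ℝ) × (Fin n → ℝ × ℝ) =>
      (i.insertNth z.1 z.2 : Fin (n + 1) → ℝ × ℝ) :=
  (MeasurableEquiv.piFinSuccAbove (fun _ : Fin (n + 1) => ℝ × ℝ) i).symm.measurable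

lemma measurable_joint {Φ : Set (ℝ × ℝ) → ENNReal}
    (hm : ∀ m, Measurable fun ω : Fin m → ℝ × ℝ => Φ (Set.range ω)) (n : ℕ) :
    Measurable fun z : (ℝ × ℝ) × (Fin n → ℝ × ℝ) => Φ (insert z.1 (Set.range z.2)) := by
  have := (hm (n + 1)).comp (measurable_insertNth (n := n) 0)
  simpa only [Function.comp_def, range_insertNth] using this

lemma measurable_insert_const {Φ : Set (ℝ × ℝ) → ENNReal}
    (hm : ∀ m, Measurable fun ω : Fin m → ℝ × ℝ => Φ (Set.range ω)) (p : ℝ × ℝ) (m : ℕ) :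
    Measurable fun ω : Fin m → ℝ × ℝ => Φ (insert p (Set.range ω)) :=
  (measurable_joint hm m).comp (measurable_const.prodMk measurable_id)

lemma split_pi (μ ν ρ : Measure (ℝ × ℝ)) [IsFiniteMeasure μ] [IsFiniteMeasure ν]
    [IsFiniteMeasure ρ]
    (a : ENNReal) (φ : ℝ × ℝ → ℝ × ℝ) (hφ : Measurable φ) (hν : ν = a • μ.map φ + ρ)
    (B : Set (ℝ × ℝ)) (hB : ∀ᵐ z ∂ρ, z ∈ B) (n : ℕ) :
    ∀ Φ : Set (ℝ × ℝ) → ENNReal,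
      (∀ m, Measurable fun ω : Fin m → ℝ × ℝ => Φ (Set.range ω)) →
      (∀ S, ∀ z ∈ B, Φ (insert z S) = Φ S) →
      ∫⁻ ω, Φ (Set.range ω) ∂(Measure.pi fun _ : Fin n => ν) =
      ∑ j ∈ Finset.range (n + 1), (n.choose j : ENNReal) * (a ^ j * (ρ Set.univ) ^ (n - j) *
        ∫⁻ ω, Φ (φ '' Set.range ω) ∂(Measure.pi fun _ : Fin j => μ)) := by
  induction n with
  | zero =>
    intro Φ hm hΦ
    simp
  | succ n ih =>
    intro Φ hm hΦ
    have hmφ : ∀ Φ : Set (ℝ × ℝ) → ENNReal,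
        (∀ m, Measurable fun ω : Fin m → ℝ × ℝ => Φ (Set.range ω)) →
        ∀ m, Measurable fun ω : Fin m → ℝ × ℝ => Φ (φ '' Set.range ω) := by
      intro Φ hm m
      have := (hm m).comp (show Measurable fun ω : Fin m → ℝ × ℝ => φ ∘ ω from
        measurable_pi_lambda _ fun i => hφ.comp (measurable_pi_apply i))
      simpa only [Function.comp_def, ← Set.range_comp] using this
    have hmx : ∀ x, ∀ m, Measurable fun ω : Fin m → ℝ × ℝ => Φ (insert x (Set.range ω)) :=
      fun x m => (measurable_joint hm m).comp (by fun_prop : Measurable fun ω => (x, ω))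
    rw [lintegral_pi_succ ν 0 _ (hm (n + 1))]
    simp only [range_insertNth]
    have hJ : Measurable fun x => ∫⁻ ω, Φ (insert x (Set.range ω)) ∂(Measure.pi fun _ : Fin n => ν) :=
      (measurable_joint hm n).lintegral_prod_right'
    rw [show (∫⁻ x, ∫⁻ ω, Φ (insert x (Set.range ω)) ∂(Measure.pi fun _ : Fin n => ν) ∂ν) =
      ∫⁻ x, ∫⁻ ω, Φ (insert x (Set.range ω)) ∂(Measure.pi fun _ : Fin n => ν) ∂(a • μ.map φ + ρ) by
        rw [← hν]]
    rw [lintegral_add_measure, lintegral_smul_measure, lintegral_map hJ hφ]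
    have e2 : ∫⁻ x, ∫⁻ ω, Φ (insert x (Set.range ω)) ∂(Measure.pi fun _ : Fin n => ν) ∂ρ =
        (∫⁻ ω, Φ (Set.range ω) ∂(Measure.pi fun _ : Fin n => ν)) * ρ Set.univ := by
      rw [← lintegral_const]
      apply lintegral_congr_ae
      filter_upwards [hB] with x hx
      simp only [hΦ _ x hx]
    rw [e2, ih Φ hm hΦ]
    have e1 : ∀ x, ∫⁻ ω, Φ (insert (φ x) (Set.range ω)) ∂(Measure.pi fun _ : Fin n => ν) =
        ∑ j ∈ Finset.range (n + 1), (n.choose j : ENNReal) * (a ^ j * (ρ Set.univ) ^ (n - j) *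
        ∫⁻ ω, Φ (φ '' (insert x (Set.range ω))) ∂(Measure.pi fun _ : Fin j => μ)) := by
      intro x
      rw [ih (fun S => Φ (insert (φ x) S)) (hmx (φ x))
        (by intro S z hz; rw [Set.insert_comm, hΦ _ z hz])]
      simp only [Set.image_insert_eq]
    simp_rw [e1]
    have hmj : ∀ j, Measurable fun x =>
        ∫⁻ ω, Φ (φ '' (insert x (Set.range ω))) ∂(Measure.pi fun _ : Fin j => μ) := by
      intro j
      have := measurable_joint (Φ := fun S => Φ (φ '' S)) (hmφ Φ hm) j
      exact this.lintegral_prod_right'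
    rw [lintegral_finsetSum _ (fun j _ => ((hmj j).const_mul _).const_mul _)]
    have e3 : ∀ j, ∫⁻ x, (n.choose j : ENNReal) * (a ^ j * (ρ Set.univ) ^ (n - j) *
        ∫⁻ ω, Φ (φ '' (insert x (Set.range ω))) ∂(Measure.pi fun _ : Fin j => μ)) ∂μ =
        (n.choose j : ENNReal) * (a ^ j * (ρ Set.univ) ^ (n - j) *
        ∫⁻ ω, Φ (φ '' (Set.range ω)) ∂(Measure.pi fun _ : Fin (j + 1) => μ)) := by
      intro j
      rw [lintegral_const_mul _ ((hmj j).const_mul _), lintegral_const_mul _ (hmj j),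
        lintegral_pi_succ μ 0 _ (hmφ Φ hm (j + 1))]
      simp only [range_insertNth]
    simp_rw [e3]
    rw [Finset.sum_choose_succ_mul (fun j l => a ^ j * (ρ Set.univ) ^ l *
        ∫⁻ ω, Φ (φ '' (Set.range ω)) ∂(Measure.pi fun _ : Fin j => μ)) n, add_comm,
      Finset.sum_mul, smul_eq_mul, Finset.mul_sum]
    congr 1
    · apply Finset.sum_congr rfl
      intro j hj
      rw [Finset.mem_range] at hj
      rw [show n + 1 - j = (n - j) + 1 by omega]
      ring
    · apply Finset.sum_congr rfl
      intro j hj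
      ring

lemma ae_pi {n : ℕ} {p : ℝ × ℝ → Prop} (hp : ∀ᵐ z ∂μT, p z) :
    ∀ᵐ ω ∂(Measure.pi fun _ : Fin n => μT), ∀ i, p (ω i) := by
  rw [ae_all_iff]
  intro i
  exact (Measure.tendsto_eval_ae_ae (μ := fun _ : Fin n => μT) (i := i)).eventually hp

lemma ae_inj (n : ℕ) : ∀ᵐ ω ∂(Measure.pi fun _ : Fin (n + 1) => μT),
    ∀ i j, i ≠ j → hh (ω i) ≠ hh (ω j) := by
  have hm := measurable_hh
  rw [ae_all_iff]; intro i
  rw [ae_all_iff]; intro j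
  by_cases hij : i = j
  · exact Filter.Eventually.of_forall fun ω h => absurd hij h
  obtain ⟨j', rfl⟩ := Fin.exists_succAbove_eq (Ne.symm hij)
  have hms : MeasurableSet {ω : Fin (n + 1) → ℝ × ℝ | hh (ω i) = hh (ω (i.succAbove j'))} :=
    measurableSet_eq_fun (by fun_prop) (by fun_prop)
  have : (Measure.pi fun _ : Fin (n + 1) => μT)
      {ω | hh (ω i) = hh (ω (i.succAbove j'))} = 0 := by
    rw [← lintegral_indicator_one hms, lintegral_pi_succ μT i _ (measurable_one.indicator hms)]
    rw [lintegral_eq_zero_iff']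
    · refine Filter.Eventually.of_forall fun x => ?_
      refine lintegral_eq_zero_of_ae_eq_zero ?_
      filter_upwards [ae_pi (n := n) (ae_hh_ne (hh x))] with ω hω
      apply Set.indicator_of_notMem
      simpa using (hω j').symm
    · refine Measurable.aemeasurable ?_
      have := ((measurable_one (α := ENNReal)).indicator hms).comp (measurable_insertNth i)
      exact this.lintegral_prod_right'
  filter_upwards [measure_eq_zero_iff_ae_notMem.1 this] with ω hω _ using hω

lemma mem_Del_iff {p z : ℝ × ℝ} (hz : z ∈ T) (hz1 : z.1 < 1) :
    z ∈ Del (hh p) ↔ hh p ≤ hh z := by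
  obtain ⟨h1, h2, h3⟩ := (mem_T z).1 hz
  simp only [Del, Set.mem_ofPred_eq]
  rw [show hh z = z.2 / (1 - z.1) from rfl, le_div_iff₀ (by linarith)]
  tauto

lemma first_point {Φ : Set (ℝ × ℝ) → ENNReal}
    (hm : ∀ m, Measurable fun ω : Fin m → ℝ × ℝ => Φ (Set.range ω)) (n : ℕ) :
    ∫⁻ ω, Φ (Set.range ω) ∂(Measure.pi fun _ : Fin (n + 1) => μT) =
      (n + 1) * ∫⁻ p, ∫⁻ ω, Φ (insert p (Set.range ω))
        ∂(Measure.pi fun _ : Fin n => μT.restrict (Del (hh p))) ∂μT := by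
  have hmh := measurable_hh
  set E : Fin (n + 1) → Set (Fin (n + 1) → ℝ × ℝ) :=
    fun i => {ω | ∀ j, ω (i.succAbove j) ∈ Del (hh (ω i))} with hE
  have hEm : ∀ i, MeasurableSet (E i) := by
    intro i
    have : E i = ⋂ j, {ω | 0 ≤ (ω (i.succAbove j)).1} ∩
      ({ω | hh (ω i) * (1 - (ω (i.succAbove j)).1) ≤ (ω (i.succAbove j)).2} ∩
       {ω | (ω (i.succAbove j)).1 + (ω (i.succAbove j)).2 ≤ 1}) := by
      ext ω; simp only [hE, Del, Set.mem_iInter]; rfl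
    rw [this]
    refine MeasurableSet.iInter fun j => ?_
    exact (measurableSet_le (by fun_prop) (by fun_prop)).inter
      ((measurableSet_le (by fun_prop) (by fun_prop)).inter
      (measurableSet_le (by fun_prop) (by fun_prop)))
  have hsum : ∀ᵐ ω ∂(Measure.pi fun _ : Fin (n + 1) => μT), Φ (Set.range ω) =
      ∑ i, (E i).indicator (fun ω => Φ (Set.range ω)) ω := by
    filter_upwards [ae_inj n, ae_pi (n := n + 1) ae_good_s2] with ω hi hg
    obtain ⟨i, hmin⟩ := Finite.exists_min (fun i => hh (ω i))
    rw [Finset.sum_eq_single i]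
    · rw [Set.indicator_of_mem]
      intro j
      rw [mem_Del_iff (hg _).1 (hg _).2.2.1]
      exact hmin _
    · intro i' _ hne
      apply Set.indicator_of_notMem
      intro hmem
      obtain ⟨j, hj⟩ := Fin.exists_succAbove_eq (Ne.symm hne)
      have := hmem j
      rw [mem_Del_iff (hg _).1 (hg _).2.2.1, hj] at this
      exact hi i' i hne (le_antisymm this (hmin i'))
    · simp
  rw [lintegral_congr_ae hsum, lintegral_finsetSum _ (fun i _ => (hm (n + 1)).indicator (hEm i))]
  have : ∀ i ∈ Finset.univ, ∫⁻ ω, (E i).indicator (fun ω => Φ (Set.range ω)) ω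
        ∂(Measure.pi fun _ : Fin (n + 1) => μT) =
      ∫⁻ p, ∫⁻ ω, Φ (insert p (Set.range ω))
        ∂(Measure.pi fun _ : Fin n => μT.restrict (Del (hh p))) ∂μT := by
    intro i _
    rw [lintegral_pi_succ μT i _ ((hm (n + 1)).indicator (hEm i))]
    congr 1; funext p
    rw [← Measure.restrict_pi_pi, ← lintegral_indicator
      (MeasurableSet.univ_pi fun _ => measurableSet_Del _)]
    congr 1; funext ω
    by_cases hω : ω ∈ Set.univ.pi fun _ => Del (hh p)
    · rw [Set.indicator_of_mem hω, Set.indicator_of_mem, range_insertNth]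
      intro j
      simpa using hω j (Set.mem_univ _)
    · rw [Set.indicator_of_notMem hω, Set.indicator_of_notMem]
      intro hmem
      apply hω
      intro j _
      simpa using hmem j
  rw [Finset.sum_congr rfl this]
  simp

/-! ### Measurability of the area -/

/-- the `k`-th power of the area functional -/
def Phi (k : ℕ) (S : Set (ℝ × ℝ)) : ENNReal := (2 * volume (convexHull ℝ (S ∪ {(1, 0), (0, 1)}))) ^ k

lemma isClosed_hull {m : ℕ} :
    IsClosed {z : (Fin m → ℝ × ℝ) × (ℝ × ℝ) | z.2 ∈ convexHull ℝ (Set.range z.1)} := by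
  have h0 : ∀ ω : Fin m → ℝ × ℝ, convexHull ℝ (Set.range ω) =
      (Fintype.linearCombination ℝ ω) '' (stdSimplex ℝ (Fin m)) := by
    intro ω
    apply Set.Subset.antisymm
    · refine convexHull_min ?_ ((convex_stdSimplex ℝ (Fin m)).linear_image _)
      rintro _ ⟨i, rfl⟩
      exact ⟨Pi.single i 1, single_mem_stdSimplex ℝ i, by simp⟩
    · rintro _ ⟨w, hw, rfl⟩
      rw [Fintype.linearCombination_apply]
      exact (convex_convexHull ℝ _).sum_mem (fun i _ => hw.1 i) hw.2
        (fun i _ => subset_convexHull ℝ _ ⟨i, rfl⟩)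
  have h1 : {z : (Fin m → ℝ × ℝ) × (ℝ × ℝ) | z.2 ∈ convexHull ℝ (Set.range z.1)} =
      Prod.snd '' {y : (stdSimplex ℝ (Fin m)) × ((Fin m → ℝ × ℝ) × (ℝ × ℝ)) |
        ∑ i, (y.1 : Fin m → ℝ) i • y.2.1 i = y.2.2} := by
    ext ⟨ω, x⟩
    simp only [Set.mem_ofPred_eq, Set.mem_image, h0, Fintype.linearCombination_apply]
    constructor
    · rintro ⟨w, hw, hx⟩
      exact ⟨(⟨w, hw⟩, (ω, x)), hx, rfl⟩
    · rintro ⟨⟨⟨w, hw⟩, ω', x'⟩, hx, he⟩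
      obtain ⟨rfl, rfl⟩ := Prod.mk.inj he
      exact ⟨w, hw, hx⟩
  rw [h1]
  refine isClosedMap_snd_of_compactSpace _ ?_
  refine isClosed_eq ?_ (by fun_prop)
  refine continuous_finsetSum _ fun i _ => ?_
  have c1 : Continuous fun y : (stdSimplex ℝ (Fin m)) × ((Fin m → ℝ × ℝ) × (ℝ × ℝ)) =>
      (y.1 : Fin m → ℝ) i :=
    (continuous_apply i).comp (continuous_subtype_val.comp continuous_fst)
  have c2 : Continuous fun y : (stdSimplex ℝ (Fin m)) × ((Fin m → ℝ × ℝ) × (ℝ × ℝ)) => y.2.1 i :=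
    (continuous_apply i).comp (continuous_fst.comp continuous_snd)
  exact c1.smul c2

lemma measurable_Phi (k m : ℕ) : Measurable fun ω : Fin m → ℝ × ℝ => Phi k (Set.range ω) := by
  have h : ∀ m, Measurable fun ω : Fin m → ℝ × ℝ => volume (convexHull ℝ (Set.range ω)) :=
    fun m => measurable_measure_prodMk_left (isClosed_hull (m := m)).measurableSet
  have h2 : Measurable fun ω : Fin m → ℝ × ℝ =>
      (Fin.insertNth 0 ((1 : ℝ), (0 : ℝ)) (Fin.insertNth 0 ((0 : ℝ), (1 : ℝ)) ω : Fin (m + 1) → ℝ × ℝ)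
        : Fin (m + 2) → ℝ × ℝ) :=
    (measurable_insertNth 0).comp (measurable_const.prodMk
      ((measurable_insertNth 0).comp (measurable_const.prodMk measurable_id)))
  have h3 := (((h (m + 2)).comp h2).const_mul 2).pow_const k
  simp only [Function.comp_def, range_insertNth] at h3
  have e : ∀ ω : Fin m → ℝ × ℝ, Set.range ω ∪ {((1 : ℝ), (0 : ℝ)), (0, 1)} =
      insert ((1 : ℝ), (0 : ℝ)) (insert ((0 : ℝ), (1 : ℝ)) (Set.range ω)) := by
    intro ω; ext z; simp only [Set.mem_union, Set.mem_insert_iff, Set.mem_singleton_iff]; tauto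
  simp only [Phi, e]
  exact h3

/-! ### The moment recursion -/

/-- moments -/
def Mom (n k : ℕ) : ENNReal := ∫⁻ ω, (2 * volume (Tchain n ω)) ^ k ∂ P n

lemma measurable_area (n : ℕ) : Measurable fun ω => 2 * volume (Tchain n ω) := by
  have := measurable_Phi 1 n
  simpa [Phi, Tchain] using this

lemma expand_moment (j k : ℕ) (a b : ENNReal) :
    ∫⁻ ω, (b + a * (2 * volume (Tchain j ω))) ^ k ∂P j =
      ∑ i ∈ Finset.range (k + 1), a ^ i * b ^ (k - i) * k.choose i * Mom j i := by
  have e : ∀ ω, (b + a * (2 * volume (Tchain j ω))) ^ k = ∑ i ∈ Finset.range (k + 1),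
      a ^ i * b ^ (k - i) * k.choose i * (2 * volume (Tchain j ω)) ^ i := by
    intro ω
    generalize 2 * volume (Tchain j ω) = v
    rw [add_comm, add_pow]
    apply Finset.sum_congr rfl
    intro i _
    rw [mul_pow]
    ring
  simp_rw [e]
  rw [lintegral_finsetSum]
  · apply Finset.sum_congr rfl
    intro i _
    rw [lintegral_const_mul _ ((measurable_area j).pow_const i), Mom]
  · intro i _
    exact ((measurable_area j).pow_const i).const_mul _

lemma insert_hull {z : ℝ × ℝ} {S F : Set (ℝ × ℝ)} (hz : z ∈ convexHull ℝ F) :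
    convexHull ℝ (insert z (S ∪ F)) = convexHull ℝ (S ∪ F) := by
  apply Set.Subset.antisymm
  · refine convexHull_min ?_ (convex_convexHull ℝ _)
    rintro w (rfl | hw)
    · exact convexHull_mono Set.subset_union_right hz
    · exact subset_convexHull ℝ _ hw
  · exact convexHull_mono (Set.subset_insert _ _)

lemma set_swap (p : ℝ × ℝ) (S : Set (ℝ × ℝ)) :
    insert p S ∪ {(1, 0), (0, 1)} = S ∪ {p, (1, 0), (0, 1)} := by
  ext z; simp only [Set.mem_union, Set.mem_insert_iff, Set.mem_singleton_iff]; tauto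

lemma Phi_insert {h s : ℝ} (k : ℕ) (h1 : h < 1) (hs1 : s < 1) (S : Set (ℝ × ℝ)) (z : ℝ × ℝ)
    (hz : z ∈ Bt h s) :
    Phi k (insert (s, h * (1 - s)) (insert z S)) = Phi k (insert (s, h * (1 - s)) S) := by
  have hz' := Bt_subset h1 hs1 hz
  simp only [Phi]
  rw [set_swap, set_swap, Set.insert_union, insert_hull hz']

lemma Phi_image {h s : ℝ} (k j : ℕ) (h0 : 0 < h) (h1 : h < 1) (hs : 0 < s) (hs1 : s < 1) :
    ∫⁻ ω, Phi k (insert (s, h * (1 - s)) (ph h s '' Set.range ω))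
      ∂(Measure.pi fun _ : Fin j => μT) =
    ∑ i ∈ Finset.range (k + 1), ENNReal.ofReal (s * (1 - h)) ^ i *
          ENNReal.ofReal ((1 - h) * (1 - s)) ^ (k - i) * k.choose i * Mom j i := by
  rw [← expand_moment, P]
  apply lintegral_congr_ae
  filter_upwards [ae_pi (n := j) ae_T] with ω hω
  rw [Phi, set_swap, volume_hull h0 h1 hs hs1 (Set.range_subset_iff.2 hω), Tchain]

lemma inner_moment' (n k : ℕ) {h s : ℝ} (h0 : 0 < h) (h1 : h < 1) (hs : 0 < s) (hs1 : s < 1) :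
    ∫⁻ ω, Phi k (insert (s, h * (1 - s)) (Set.range ω))
      ∂(Measure.pi fun _ : Fin n => μT.restrict (Del h)) =
    ∑ j ∈ Finset.range (n + 1), ∑ i ∈ Finset.range (k + 1),
      (n.choose j : ENNReal) * k.choose i * Mom j i *
      (ENNReal.ofReal ((1 - h) * (1 - s)) ^ (n - j + (k - i)) *
        ENNReal.ofReal (s * (1 - h)) ^ (j + i)) := by
  have hfin : IsFiniteMeasure (rho h s) := by unfold rho; infer_instance
  have hmeas : ∀ m, Measurable fun ω : Fin m → ℝ × ℝ =>
      Phi k (insert (s, h * (1 - s)) (Set.range ω)) :=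
    measurable_insert_const (measurable_Phi k) _
  have key := split_pi μT (μT.restrict (Del h)) (rho h s) (ENNReal.ofReal (s * (1 - h))) (ph h s) (measurable_ph h s)
    (decomp h0 h1 hs hs1) (Bt h s) (rho_ae h s h1 hs) n
    (fun S => Phi k (insert (s, h * (1 - s)) S)) hmeas (Phi_insert k h1 hs1)
  rw [key]
  apply Finset.sum_congr rfl
  intro j _
  rw [Phi_image k j h0 h1 hs hs1, rho_univ h0 h1 hs hs1, Finset.mul_sum, Finset.mul_sum]
  apply Finset.sum_congr rfl
  intro i _
  generalize ENNReal.ofReal (s * (1 - h)) = A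
  generalize ENNReal.ofReal ((1 - h) * (1 - s)) = B
  rw [pow_add, pow_add]
  ring

lemma inner_moment (n k : ℕ) {p : ℝ × ℝ} (hp : p ∈ T ∧ 0 < p.1 ∧ p.1 < 1 ∧ 0 < hh p ∧ hh p < 1) :
    ∫⁻ ω, Phi k (insert p (Set.range ω)) ∂(Measure.pi fun _ : Fin n => μT.restrict (Del (hh p))) =
    ∑ j ∈ Finset.range (n + 1), ∑ i ∈ Finset.range (k + 1),
      (n.choose j : ENNReal) * k.choose i * Mom j i *
      (ENNReal.ofReal ((1 - hh p) * (1 - p.1)) ^ (n - j + (k - i)) *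
        ENNReal.ofReal (p.1 * (1 - hh p)) ^ (j + i)) := by
  obtain ⟨hT, hs, hs1, h0, h1⟩ := hp
  have hp : p = (p.1, hh p * (1 - p.1)) := by
    ext
    · rfl
    · have : 1 - p.1 ≠ 0 := by linarith
      simp only [hh]; field_simp
  have key := inner_moment' n k h0 h1 hs hs1
  rw [← hp] at key
  exact key

lemma Mom_rec (n k : ℕ) : Mom (n + 1) k =
    (n + 1) * ∑ j ∈ Finset.range (n + 1), ∑ i ∈ Finset.range (k + 1),
      (n.choose j : ENNReal) * k.choose i * Mom j i *
      ENNReal.ofReal (2 * ((n - j + (k - i) + 1).factorial * (j + i).factorial) /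
        (((n - j + (k - i) : ℕ) + (j + i : ℕ) + 1) *
          (n - j + (k - i) + (j + i) + 2).factorial)) := by
  have hm := measurable_hh
  have h := first_point (measurable_Phi k) n
  rw [show Mom (n + 1) k = ∫⁻ ω, Phi k (Set.range ω) ∂(Measure.pi fun _ : Fin (n + 1) => μT) from rfl,
    h]
  congr 1
  have e : ∀ᵐ p ∂μT, ∫⁻ ω, Phi k (insert p (Set.range ω))
      ∂(Measure.pi fun _ : Fin n => μT.restrict (Del (hh p))) =
    ∑ j ∈ Finset.range (n + 1), ∑ i ∈ Finset.range (k + 1),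
      (n.choose j : ENNReal) * k.choose i * Mom j i *
      (ENNReal.ofReal ((1 - hh p) * (1 - p.1)) ^ (n - j + (k - i)) *
        ENNReal.ofReal (p.1 * (1 - hh p)) ^ (j + i)) := by
    filter_upwards [ae_good_s2] with p hp using inner_moment n k hp
  rw [lintegral_congr_ae e, lintegral_finsetSum]
  · apply Finset.sum_congr rfl
    intro j _
    rw [lintegral_finsetSum]
    · apply Finset.sum_congr rfl
      intro i _
      rw [lintegral_const_mul _ (by fun_prop), beta_T]
    · intro i _; fun_prop
  · intro j _; fun_prop

lemma area_le {n : ℕ} : ∀ᵐ ω ∂P n, 2 * volume (Tchain n ω) ≤ 1 := by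
  filter_upwards [ae_pi (n := n) ae_T] with ω hω
  rw [← volume_T]
  gcongr
  refine convexHull_min (Set.union_subset (Set.range_subset_iff.2 hω) ?_) (convex_convexHull ℝ _)
  rintro z (rfl | rfl) <;> simp [mem_T]

lemma Mom_ne_top (n k : ℕ) : Mom n k ≠ ⊤ := by
  have : Mom n k ≤ ∫⁻ _, 1 ∂P n := by
    apply lintegral_mono_ae
    filter_upwards [area_le (n := n)] with ω hω
    exact pow_le_one₀ (by positivity) hω
  refine ne_top_of_le_ne_top ?_ this
  simp

lemma integral_V (n k : ℕ) : ∫ ω, (V n ω) ^ k ∂P n = (Mom n k).toReal := by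
  rw [Mom, ← integral_toReal]
  · congr 1; funext ω
    simp [V]
  · exact ((measurable_area n).pow_const k).aemeasurable
  · filter_upwards [area_le (n := n)] with ω hω
    exact lt_of_le_of_lt (pow_le_one₀ (by positivity) hω) ENNReal.one_lt_top

lemma Mom_zero (k : ℕ) (hk : k ≠ 0) : Mom 0 k = 0 := by
  rw [Mom]
  have : ∀ ω : Fin 0 → ℝ × ℝ, volume (Tchain 0 ω) = 0 := by
    intro ω
    refine measure_mono_null ?_ (volume_line (fun x => 1 - x) (by fun_prop))
    refine convexHull_min ?_ ?_
    · rintro z (⟨i, -⟩ | rfl | rfl)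
      · exact i.elim0
      · simp
      · simp
    · rintro z hz w hw a b ha hb hab
      simp only [Set.mem_ofPred_eq, Prod.fst_add, Prod.snd_add, Prod.smul_fst, Prod.smul_snd,
        smul_eq_mul] at *
      rw [hz, hw]; linear_combination hab
  simp [this, hk]

lemma real_rec (n k : ℕ) : ∫ ω, (V (n + 1) ω) ^ k ∂P (n + 1) =
    (n + 1) * ∑ j ∈ Finset.range (n + 1), ∑ i ∈ Finset.range (k + 1),
      (n.choose j : ℝ) * k.choose i * (∫ ω, (V j ω) ^ i ∂P j) *
      (2 * ((n - j + (k - i) + 1).factorial * (j + i).factorial) /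
        (((n - j + (k - i) : ℕ) + (j + i : ℕ) + 1) *
          (n - j + (k - i) + (j + i) + 2).factorial)) := by
  simp_rw [integral_V]
  have hn : ((n : ENNReal) + 1).toReal = (n : ℝ) + 1 := by
    rw [ENNReal.toReal_add (by finiteness) (by finiteness)]; simp
  rw [Mom_rec, ENNReal.toReal_mul, ENNReal.toReal_sum, hn]
  · congr 1
    apply Finset.sum_congr rfl
    intro j _
    rw [ENNReal.toReal_sum]
    · apply Finset.sum_congr rfl
      intro i _
      rw [ENNReal.toReal_mul, ENNReal.toReal_mul, ENNReal.toReal_mul, ENNReal.toReal_ofReal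
        (by positivity)]
      simp
    · intro i _
      exact ENNReal.mul_ne_top (ENNReal.mul_ne_top (by finiteness) (Mom_ne_top j i))
        ENNReal.ofReal_ne_top
  · intro j _
    refine ENNReal.sum_ne_top.2 fun i _ => ?_
    exact ENNReal.mul_ne_top (ENNReal.mul_ne_top (by finiteness) (Mom_ne_top j i))
        ENNReal.ofReal_ne_top

lemma q_zero (k : ℕ) (hk : k ≠ 0) : q 0 k = 0 := by
  rw [q, integral_V, Mom_zero k hk]; simp

/-! ### Combinatorics -/

lemma cast_choose' (a b : ℕ) : ((a + b).choose b : ℝ) = (a + b).factorial / (a.factorial * b.factorial) := by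
  rw [← Nat.choose_symm_add, Nat.cast_add_choose]

lemma term_eq (a j b i : ℕ) (m : ℝ) :
    (((j + a : ℕ) : ℝ) + 1 + ((i + b : ℕ) : ℝ)) * (((j + a : ℕ) : ℝ) + 1 + ((i + b : ℕ) : ℝ) + 1) / 2 *
      (((j + a + 1 + (i + b)).choose (i + b) : ℝ) * (((j + a : ℕ) : ℝ) + 1) *
      (((j + a).choose j : ℝ) * (i + b).choose i * m *
      (2 * ((a + b + 1).factorial * (j + i).factorial) /
        (((a + b : ℕ) + (j + i : ℕ) + 1) * (a + b + (j + i) + 2).factorial)))) =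
    ((a : ℝ) + b + 1) * (a + b).choose b * ((j + i).choose i * m) := by
  rw [cast_choose', cast_choose' a b, cast_choose' j i, Nat.cast_add_choose, Nat.cast_add_choose,
    show a + b + (j + i) + 2 = (j + a + 1 + (i + b)) + 1 by ring,
    Nat.factorial_succ (j + a + 1 + (i + b)), Nat.factorial_succ (a + b), Nat.factorial_succ (j + a)]
  push_cast
  have h1 : ((j + a + 1 + (i + b)).factorial : ℝ) ≠ 0 := by positivity
  have h2 : ((j + a).factorial : ℝ) ≠ 0 := by positivity
  have h3 : ((i + b).factorial : ℝ) ≠ 0 := by positivity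
  have h4 : (a.factorial : ℝ) ≠ 0 := by positivity
  have h5 : (b.factorial : ℝ) ≠ 0 := by positivity
  have h6 : (i.factorial : ℝ) ≠ 0 := by positivity
  have h7 : (j.factorial : ℝ) ≠ 0 := by positivity
  have h8 : (a : ℝ) + b + (j + i) + 1 ≠ 0 := by positivity
  have h9 : (j : ℝ) + a + 1 + (i + b) + 1 ≠ 0 := by positivity
  have h10 : (j : ℝ) + a + 1 ≠ 0 := by positivity
  field_simp
  ring

/-- convolution kernel -/
def Kz (a b : ℤ) : ℝ :=
  if 0 ≤ a ∧ 0 ≤ b then ((a : ℝ) + b + 1) * (a.toNat + b.toNat).choose b.toNat else 0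

lemma Kz_nat (a b : ℕ) : Kz a b = ((a : ℝ) + b + 1) * (a + b).choose b := by
  simp [Kz]

lemma Kz_neg_left {a b : ℤ} (h : a < 0) : Kz a b = 0 := by
  rw [Kz, if_neg]; omega

lemma Kz_neg_right {a b : ℤ} (h : b < 0) : Kz a b = 0 := by
  rw [Kz, if_neg]; omega

lemma A_succ (n k : ℕ) :
    ((n : ℝ) + 1 + k) * ((n : ℝ) + 1 + k + 1) / 2 * q (n + 1) k =
      ∑ j ∈ Finset.range (n + 1), ∑ i ∈ Finset.range (k + 1),
        Kz ((n : ℤ) - j) ((k : ℤ) - i) * q j i := by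
  rw [q, real_rec, ← mul_assoc ((n + 1 + k).choose k : ℝ), Finset.mul_sum, Finset.mul_sum]
  apply Finset.sum_congr rfl
  intro j hj
  rw [Finset.mul_sum, Finset.mul_sum]
  apply Finset.sum_congr rfl
  intro i hi
  rw [Finset.mem_range] at hi hj
  obtain ⟨a, rfl⟩ := Nat.exists_eq_add_of_le (show j ≤ n by omega)
  obtain ⟨b, rfl⟩ := Nat.exists_eq_add_of_le (show i ≤ k by omega)
  rw [show ((j + a : ℕ) : ℤ) - j = (a : ℕ) by push_cast; ring,
    show ((i + b : ℕ) : ℤ) - i = (b : ℕ) by push_cast; ring, Kz_nat,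
    Nat.add_sub_cancel_left, Nat.add_sub_cancel_left, term_eq, q]

lemma A_ext (m k N' K' : ℕ) (hm : m ≤ N') (hk : k < K') :
    ((m : ℝ) + k) * ((m : ℝ) + k + 1) / 2 * q m k =
      ∑ j ∈ Finset.range N', ∑ i ∈ Finset.range K',
        Kz ((m : ℤ) - 1 - j) ((k : ℤ) - i) * q j i := by
  cases m with
  | zero =>
    rw [Finset.sum_eq_zero]
    · by_cases hk0 : k = 0
      · simp [hk0]
      · rw [q_zero k hk0, mul_zero]
    · intro j _
      apply Finset.sum_eq_zero
      intro i _
      rw [Kz_neg_left (by push_cast; omega), zero_mul]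
  | succ n =>
    push_cast
    rw [A_succ, ← Finset.sum_subset (Finset.range_mono hm)]
    · apply Finset.sum_congr rfl
      intro j _
      rw [← Finset.sum_subset (Finset.range_mono (show k + 1 ≤ K' by omega))]
      · apply Finset.sum_congr rfl
        intro i _
        rw [add_sub_cancel_right]
      · intro i _ hi
        rw [Finset.mem_range] at hi
        rw [Kz_neg_right (by omega), zero_mul]
    · intro j _ hj
      rw [Finset.mem_range] at hj
      apply Finset.sum_eq_zero
      intro i _
      rw [Kz_neg_left (by omega), zero_mul]

lemma Kz_diff (a b : ℤ) (h : 0 ≤ a) (h' : 0 ≤ b) :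
    Kz a b - 2 * (Kz (a - 1) b + Kz a (b - 1)) +
      (Kz (a - 2) b + 2 * Kz (a - 1) (b - 1) + Kz a (b - 2)) =
      if a = 0 ∧ b = 0 then 1 else 0 := by
  lift a to ℕ using h
  lift b to ℕ using h'
  have red1 : ∀ x : ℕ, ((x + 1 : ℕ) : ℤ) - 1 = (x : ℕ) := by intro x; push_cast; ring
  have red2 : ∀ x : ℕ, ((x + 2 : ℕ) : ℤ) - 2 = (x : ℕ) := by intro x; push_cast; ring
  have red3 : ∀ x : ℕ, ((x + 2 : ℕ) : ℤ) - 1 = (x + 1 : ℕ) := by intro x; push_cast; ring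
  have pas : ∀ x y : ℕ, ((x + 1 + (y + 1)).choose (y + 1) : ℝ) =
      (x + (y + 1)).choose (y + 1) + (x + 1 + y).choose y := by
    intro x y
    rw [show x + 1 + (y + 1) = (x + 1 + y) + 1 by ring, Nat.choose_succ_succ,
      show x + 1 + y = x + (y + 1) by ring]
    push_cast; ring
  match a, b with
  | 0, 0 =>
    rw [if_pos (by simp), Kz_nat, Kz_neg_left (a := _ - 1) (by simp), Kz_neg_left (a := _ - 2) (by simp),
      Kz_neg_right (b := _ - 1) (by simp), Kz_neg_left (a := _ - 1) (by simp),
      Kz_neg_right (b := _ - 2) (by simp)]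
    simp
  | 0, 1 =>
    have e : ((1 : ℕ) : ℤ) - 1 = (0 : ℕ) := by simp
    rw [if_neg (by simp), Kz_nat, Kz_neg_left (a := _ - 1) (by simp), Kz_neg_left (a := _ - 2) (by simp),
      Kz_neg_left (a := _ - 1) (by simp), e, Kz_nat,
      Kz_neg_right (b := _ - 2) (by simp)]
    norm_num
  | 0, y + 2 =>
    rw [if_neg (by omega), Kz_nat, Kz_neg_left (a := _ - 1) (by simp), Kz_neg_left (a := _ - 2) (by simp),
      Kz_neg_left (a := _ - 1) (by simp), red2, red3, Kz_nat, Kz_nat]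
    simp; ring
  | 1, 0 =>
    have e : ((1 : ℕ) : ℤ) - 1 = (0 : ℕ) := by simp
    rw [if_neg (by simp), Kz_nat, e, Kz_nat, Kz_neg_left (a := _ - 2) (by simp),
      Kz_neg_right (b := _ - 1) (by simp), Kz_neg_right (b := _ - 1) (by simp),
      Kz_neg_right (b := _ - 2) (by simp)]
    norm_num
  | x + 2, 0 =>
    rw [if_neg (by omega), Kz_nat, red2, red3, Kz_nat, Kz_nat,
      Kz_neg_right (b := _ - 1) (by simp), Kz_neg_right (b := _ - 1) (by simp),
      Kz_neg_right (b := _ - 2) (by simp)]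
    simp; ring
  | 1, 1 =>
    have e : ((1 : ℕ) : ℤ) - 1 = (0 : ℕ) := by simp
    rw [if_neg (by simp), e, Kz_nat, Kz_nat, Kz_nat, Kz_nat, Kz_neg_left (a := _ - 2) (by simp),
      Kz_neg_right (b := _ - 2) (by simp)]
    norm_num
  | 1, y + 2 =>
    have e : ((1 : ℕ) : ℤ) - 1 = (0 : ℕ) := by simp
    rw [if_neg (by simp), e, red2, red3, Kz_nat, Kz_nat, Kz_nat, Kz_nat, Kz_nat,
      Kz_neg_left (a := _ - 2) (by simp)]
    have p1 := pas 0 (y + 1)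
    have p2 := pas 0 y
    simp only [zero_add, Nat.choose_self] at p1 p2 ⊢
    push_cast at p1 p2 ⊢
    rw [p1, p2]
    ring
  | x + 2, 1 =>
    have e : ((1 : ℕ) : ℤ) - 1 = (0 : ℕ) := by simp
    rw [if_neg (by simp), e, red2, red3, Kz_nat, Kz_nat, Kz_nat, Kz_nat, Kz_nat,
      Kz_neg_right (b := _ - 2) (by simp)]
    simp; ring
  | x + 2, y + 2 =>
    rw [if_neg (by omega), red2, red3, red2, red3, Kz_nat, Kz_nat, Kz_nat, Kz_nat, Kz_nat, Kz_nat]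
    have p1 := pas (x + 1) (y + 1)
    have p2 := pas x (y + 1)
    have p3 := pas (x + 1) y
    have e1 : x + 1 + 1 = x + 2 := rfl
    have e2 : y + 1 + 1 = y + 2 := rfl
    rw [e1, e2] at p1
    rw [e2] at p2
    rw [e1] at p3
    push_cast
    rw [p1, p2, p3]
    ring

/-- recurrence for the normalized moments `q_{n,k}`, `n ≥ 1`, `k ≥ 2`. -/
theorem stmt2 (n k : ℕ) (hn : 1 ≤ n) (hk : 2 ≤ k) :
    q n k = ((n : ℝ) + k + 1) * ((n : ℝ) + k + 2) / 2 * q (n + 1) k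
      - ((n : ℝ) + k) * ((n : ℝ) + k + 1) * (q n k + q (n + 1) (k - 1))
      + ((n : ℝ) + k - 1) * ((n : ℝ) + k) / 2
          * (q (n - 1) k + 2 * q n (k - 1) + q (n + 1) (k - 2)) := by
  obtain ⟨n, rfl⟩ := Nat.exists_eq_add_of_le' hn
  obtain ⟨k, rfl⟩ := Nat.exists_eq_add_of_le' hk
  rw [show n + 1 - 1 = n by omega, show k + 2 - 1 = k + 1 by omega, show k + 2 - 2 = k by omega]
  have a1 := A_ext (n + 2) (k + 2) (n + 2) (k + 3) (by omega) (by omega)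
  have a2 := A_ext (n + 1) (k + 2) (n + 2) (k + 3) (by omega) (by omega)
  have a3 := A_ext (n + 2) (k + 1) (n + 2) (k + 3) (by omega) (by omega)
  have a4 := A_ext n (k + 2) (n + 2) (k + 3) (by omega) (by omega)
  have a5 := A_ext (n + 1) (k + 1) (n + 2) (k + 3) (by omega) (by omega)
  have a6 := A_ext (n + 2) k (n + 2) (k + 3) (by omega) (by omega)
  have key : q (n + 1) (k + 2) = ∑ j ∈ Finset.range (n + 2), ∑ i ∈ Finset.range (k + 3),
      (if (n + 1 : ℤ) - j = 0 ∧ (k + 2 : ℤ) - i = 0 then (1 : ℝ) else 0) * q j i := by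
    rw [Finset.sum_eq_single (n + 1), Finset.sum_eq_single (k + 2)]
    · rw [if_pos (by push_cast; omega), one_mul]
    · intro i _ hi
      rw [if_neg (by push_cast; omega), zero_mul]
    · intro h; exact absurd (Finset.mem_range.2 (by omega)) h
    · intro j _ hj
      apply Finset.sum_eq_zero
      intro i _
      rw [if_neg (by omega), zero_mul]
    · intro h; exact absurd (Finset.mem_range.2 (by omega)) h
  have key2 : q (n + 1) (k + 2) = ∑ j ∈ Finset.range (n + 2), ∑ i ∈ Finset.range (k + 3),
      (Kz (((n + 2 : ℕ) : ℤ) - 1 - j) (((k + 2 : ℕ) : ℤ) - i) * q j i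
      - 2 * (Kz (((n + 1 : ℕ) : ℤ) - 1 - j) (((k + 2 : ℕ) : ℤ) - i) * q j i
        + Kz (((n + 2 : ℕ) : ℤ) - 1 - j) (((k + 1 : ℕ) : ℤ) - i) * q j i)
      + (Kz (((n : ℕ) : ℤ) - 1 - j) (((k + 2 : ℕ) : ℤ) - i) * q j i
        + 2 * (Kz (((n + 1 : ℕ) : ℤ) - 1 - j) (((k + 1 : ℕ) : ℤ) - i) * q j i)
        + Kz (((n + 2 : ℕ) : ℤ) - 1 - j) (((k : ℕ) : ℤ) - i) * q j i)) := by
    rw [key]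
    apply Finset.sum_congr rfl
    intro j hj
    apply Finset.sum_congr rfl
    intro i hi
    rw [Finset.mem_range] at hi hj
    rw [← Kz_diff _ _ (by omega) (by omega)]
    have r1 : ((n + 2 : ℕ) : ℤ) - 1 - j = (n + 1 : ℤ) - j := by push_cast; ring
    have r2 : ((n + 1 : ℕ) : ℤ) - 1 - j = (n + 1 : ℤ) - j - 1 := by push_cast; ring
    have r3 : ((n : ℕ) : ℤ) - 1 - j = (n + 1 : ℤ) - j - 2 := by ring
    have r4 : ((k + 2 : ℕ) : ℤ) - i = (k + 2 : ℤ) - i := by push_cast; ring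
    have r5 : ((k + 1 : ℕ) : ℤ) - i = (k + 2 : ℤ) - i - 1 := by push_cast; ring
    have r6 : ((k : ℕ) : ℤ) - i = (k + 2 : ℤ) - i - 2 := by ring
    rw [r1, r2, r3, r4, r5, r6]
    ring
  simp only [Finset.sum_add_distrib, Finset.sum_sub_distrib, ← Finset.mul_sum] at key2
  rw [← a1, ← a2, ← a3, ← a4, ← a5, ← a6] at key2
  conv_lhs => rw [key2]
  push_cast
  ring

end
end
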